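/- arXiv:2512.04670 — 6 statements merged into one kernel-verified Lean document; each statement's English description precedes it below -/
import Mathlib

section
/- There exist infinitely many pairwise distinct functions w : Q → ℝ, each of which is smooth on Q, satisfies the heat equation ∂w/∂t = ∂²w/∂x² at every point of Q, and satisfies lim_{x→0⁺} w(x,t) = 0 for every t > 0 and lim_{t→0⁺} w(x,t) = 0 for every x > 0. -/
open MeasureTheory Filter Set

/-- The open quarter-plane `Q = {(x,t) : x > 0, t > 0}`. -/
def quarterPlane : Set (ℝ × ℝ) := {p | 0 < p.1 ∧ 0 < p.2}

/-- `w` is smooth on `Q`, satisfies the heat equation `∂w/∂t = ∂²w/∂x²` at every point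
of `Q`, and has vanishing boundary limit (as `x → 0⁺`) and initial limit (as `t → 0⁺`). -/
def IsHomogeneousHeatSol (w : ℝ → ℝ → ℝ) : Prop :=
  ContDiffOn ℝ (⊤ : ℕ∞) (fun p : ℝ × ℝ => w p.1 p.2) quarterPlane ∧
  (∀ x t : ℝ, 0 < x → 0 < t →
    deriv (fun s => w x s) t = iteratedDeriv 2 (fun y => w y t) x) ∧
  (∀ t : ℝ, 0 < t → Tendsto (fun x => w x t) (nhdsWithin 0 (Ioi 0)) (nhds 0)) ∧
  (∀ x : ℝ, 0 < x → Tendsto (fun t => w x t) (nhdsWithin 0 (Ioi 0)) (nhds 0))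

/-!
Differentiating the heat kernel `K` in `x` gives, up to a constant factor, the dipole solution
`x / t * K x t`. It is odd in `x`, hence vanishes at `x = 0`, and for fixed `x > 0` the factor
`exp (-x ^ 2 / (4 * t))` beats every negative power of `t` as `t → 0⁺`. It is nevertheless nonzero
inside the quarter-plane, being singular only at the corner, and its multiples give infinitely many
solutions.
-/

open Real Topology

theorem IsHomogeneousHeatSol.const_mul {w : ℝ → ℝ → ℝ} (hw : IsHomogeneousHeatSol w) (c : ℝ) :
    IsHomogeneousHeatSol (fun x t => c * w x t) := by
  obtain ⟨smooth, heat, boundary, initial⟩ := hw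
  refine ⟨contDiffOn_const.mul smooth, fun x t hx ht => ?_,
    fun t ht => by simpa using (boundary t ht).const_mul c,
    fun x hx => by simpa using (initial x hx).const_mul c⟩
  rw [deriv_const_mul_field, heat x t hx ht, iteratedDeriv_const_mul_field]

theorem tendsto_rpow_neg_mul_exp_neg_div_nhdsGT_zero (s : ℝ) {a : ℝ} (ha : 0 < a) :
    Tendsto (fun t : ℝ => t ^ (-s) * exp (-a / t)) (𝓝[>] 0) (𝓝 0) := by
  refine ((tendsto_rpow_mul_exp_neg_mul_atTop_nhds_zero s a ha).comp
    tendsto_inv_nhdsGT_zero).congr' ?_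
  filter_upwards [self_mem_nhdsWithin] with t ht
  simp only [Function.comp_apply, inv_rpow (le_of_lt ht), rpow_neg (le_of_lt ht), div_eq_mul_inv]

/-- The fundamental solution of the one-dimensional heat equation `∂w/∂t = ∂²w/∂x²`, with time as
second argument. For `t ≤ 0` it takes the junk value `0`, because `√(4 * π * t) = 0` there. -/
noncomputable def heatKernel (x t : ℝ) : ℝ := exp (-x ^ 2 / (4 * t)) / √(4 * π * t)

theorem heatKernel_pos (x : ℝ) {t : ℝ} (ht : 0 < t) : 0 < heatKernel x t := by
  unfold heatKernel
  positivity

theorem contDiffAt_heatKernel {n : WithTop ℕ∞} {p : ℝ × ℝ} (hp : 0 < p.2) :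
    ContDiffAt ℝ n (fun q : ℝ × ℝ => heatKernel q.1 q.2) p := by
  have four_mul_ne : 4 * p.2 ≠ 0 := by positivity
  have radicand_ne : 4 * π * p.2 ≠ 0 := by positivity
  have sqrt_ne : √(4 * π * p.2) ≠ 0 := by positivity
  unfold heatKernel
  fun_prop (disch := assumption)

theorem hasDerivAt_heatKernel_space (x t : ℝ) :
    HasDerivAt (fun y => heatKernel y t) (-x / (2 * t) * heatKernel x t) x := by
  have exponent : HasDerivAt (fun y : ℝ => -y ^ 2 / (4 * t)) (-x / (2 * t)) x :=
    ((hasDerivAt_pow 2 x).neg.div_const (4 * t)).congr_deriv (by push_cast; ring)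
  exact (exponent.exp.div_const √(4 * π * t)).congr_deriv (by unfold heatKernel; ring)

theorem hasDerivAt_heatKernel_time (x : ℝ) {t : ℝ} (ht : 0 < t) :
    HasDerivAt (heatKernel x) ((x ^ 2 / (4 * t ^ 2) - 1 / (2 * t)) * heatKernel x t) t := by
  have exponent : HasDerivAt (fun s : ℝ => -x ^ 2 / (4 * s)) (x ^ 2 / (4 * t ^ 2)) t :=
    ((hasDerivAt_const t (-x ^ 2)).div ((hasDerivAt_id' t).const_mul 4)
      (by positivity)).congr_deriv (by field_simp; ring)
  have root : HasDerivAt (fun s : ℝ => √(4 * π * s)) (√(4 * π * t) / (2 * t)) t :=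
    (((hasDerivAt_id' t).const_mul (4 * π)).sqrt (by positivity)).congr_deriv (by
      field_simp
      rw [sq_sqrt (by positivity)])
  refine (exponent.exp.div root (by positivity)).congr_deriv ?_
  unfold heatKernel
  field_simp

/-- The dipole solution of the heat equation: `-2` times the `x`-derivative of the heat kernel,
written out explicitly. It is a nonzero witness to the failure of uniqueness. -/
noncomputable def heatDipole (x t : ℝ) : ℝ := x / t * heatKernel x t

theorem heatDipole_pos {x t : ℝ} (hx : 0 < x) (ht : 0 < t) : 0 < heatDipole x t :=
  mul_pos (div_pos hx ht) (heatKernel_pos x ht)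

theorem contDiffAt_heatDipole {n : WithTop ℕ∞} {p : ℝ × ℝ} (hp : 0 < p.2) :
    ContDiffAt ℝ n (fun q : ℝ × ℝ => heatDipole q.1 q.2) p :=
  (contDiffAt_fst.div contDiffAt_snd hp.ne').mul (contDiffAt_heatKernel hp)

theorem hasDerivAt_heatDipole_space (x t : ℝ) :
    HasDerivAt (fun y => heatDipole y t)
      ((1 / t - x ^ 2 / (2 * t ^ 2)) * heatKernel x t) x :=
  (((hasDerivAt_id' x).div_const t).mul (hasDerivAt_heatKernel_space x t)).congr_deriv (by ring)

theorem iteratedDeriv_two_heatDipole_space (x t : ℝ) :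
    iteratedDeriv 2 (fun y => heatDipole y t) x =
      (x ^ 3 / (4 * t ^ 3) - 3 * x / (2 * t ^ 2)) * heatKernel x t := by
  have deriv_eq : deriv (fun y => heatDipole y t) =
      fun y => (1 / t - y ^ 2 / (2 * t ^ 2)) * heatKernel y t :=
    funext fun y => (hasDerivAt_heatDipole_space y t).deriv
  have factor : HasDerivAt (fun y : ℝ => 1 / t - y ^ 2 / (2 * t ^ 2)) (-x / t ^ 2) x :=
    (((hasDerivAt_pow 2 x).div_const (2 * t ^ 2)).const_sub (1 / t)).congr_deriv
      (by push_cast; ring)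
  rw [iteratedDeriv_succ, iteratedDeriv_one, deriv_eq,
    (factor.fun_mul (hasDerivAt_heatKernel_space x t)).deriv]
  ring

theorem hasDerivAt_heatDipole_time (x : ℝ) {t : ℝ} (ht : 0 < t) :
    HasDerivAt (heatDipole x)
      ((x ^ 3 / (4 * t ^ 3) - 3 * x / (2 * t ^ 2)) * heatKernel x t) t := by
  have factor : HasDerivAt (fun s : ℝ => x / s) (-x / t ^ 2) t :=
    ((hasDerivAt_const t x).div (hasDerivAt_id' t) ht.ne').congr_deriv (by ring)
  exact (factor.mul (hasDerivAt_heatKernel_time x ht)).congr_deriv (by ring)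

theorem tendsto_heatDipole_space_nhds_zero (t : ℝ) :
    Tendsto (fun x => heatDipole x t) (𝓝 0) (𝓝 0) := by
  simpa only [heatDipole, zero_div, zero_mul] using
    (hasDerivAt_heatDipole_space 0 t).continuousAt.tendsto

theorem heatDipole_eq_rpow_mul_exp (x : ℝ) {t : ℝ} (ht : 0 < t) :
    heatDipole x t = x / √(4 * π) * (t ^ (-(3 / 2) : ℝ) * exp (-(x ^ 2 / 4) / t)) := by
  have power : t ^ (-(3 / 2) : ℝ) = 1 / (t * √t) := by
    rw [rpow_neg ht.le, show (3 / 2 : ℝ) = 1 + 1 / 2 by norm_num, rpow_add ht, rpow_one,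
      ← sqrt_eq_rpow, one_div]
  rw [heatDipole, heatKernel, power, sqrt_mul (by positivity),
    show -(x ^ 2 / 4) / t = -x ^ 2 / (4 * t) by ring]
  ring

theorem tendsto_heatDipole_time_nhdsGT_zero {x : ℝ} (hx : x ≠ 0) :
    Tendsto (heatDipole x) (𝓝[>] 0) (𝓝 0) := by
  have decay := (tendsto_rpow_neg_mul_exp_neg_div_nhdsGT_zero (3 / 2)
    (a := x ^ 2 / 4) (by positivity)).const_mul (x / √(4 * π))
  rw [mul_zero] at decay
  refine decay.congr' ?_
  filter_upwards [self_mem_nhdsWithin] with t ht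
  exact (heatDipole_eq_rpow_mul_exp x ht).symm

theorem isHomogeneousHeatSol_heatDipole : IsHomogeneousHeatSol heatDipole :=
  ⟨fun _ hp => (contDiffAt_heatDipole hp.2).contDiffWithinAt,
    fun x t _ ht => (hasDerivAt_heatDipole_time x ht).deriv.trans
      (iteratedDeriv_two_heatDipole_space x t).symm,
    fun t _ => (tendsto_heatDipole_space_nhds_zero t).mono_left nhdsWithin_le_nhds,
    fun _ hx => tendsto_heatDipole_time_nhdsGT_zero hx.ne'⟩

/-- There are infinitely many pairwise distinct (as functions on `Q`) solutions of the
homogeneous Dirichlet IBVP for the heat equation on the quarter-plane. -/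
theorem heat_infinitely_many_solutions :
    ∃ F : ℕ → ℝ → ℝ → ℝ,
      (∀ m n : ℕ, m ≠ n → ∃ x t : ℝ, 0 < x ∧ 0 < t ∧ F m x t ≠ F n x t) ∧
      ∀ n : ℕ, IsHomogeneousHeatSol (F n) := by
  refine ⟨fun n x t => n * heatDipole x t, fun m n hmn => ⟨1, 1, one_pos, one_pos, fun h => ?_⟩,
    fun n => isHomogeneousHeatSol_heatDipole.const_mul n⟩
  have dipole_ne : heatDipole 1 1 ≠ 0 := (heatDipole_pos one_pos one_pos).ne'
  exact hmn (Nat.cast_injective (mul_right_cancel₀ dipole_ne h))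
end

section
/- For every integer n ≥ 1, every x > 0 and every t > 0, the absolutely convergent complex integral −(i/π) ∫_{λ∈ℝ} (−λ²)^{n−1} · λ · exp(iλx − λ²t) dλ equals (x/(2√π)) · (d^{n−1}/ds^{n−1})[ s^{−3/2} · exp(−x²/(4s)) ] evaluated at s = t. -/
open MeasureTheory Filter Set

/-!
Each differentiation in time of `λ ^ k * exp (iλx - λ²z)` brings down a factor `-λ²`, so the
integrals in question are the successive time derivatives of the first moment `∫ λ exp (iλx - λ²z)`.
Integrating the `λ`-derivative of `exp (iλx - λ²z)` over the line expresses that first moment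
through the Fourier transform of a Gaussian. All of this takes place for complex `x` and `Re z > 0`;
the real statement follows because a function holomorphic near a set of real points and real-valued
on it has the same derivatives there along the real and the complex variable.
-/

theorem ofReal_iteratedDerivWithin_of_eqOn {f : ℝ → ℝ} {g : ℂ → ℂ} {S : Set ℝ}
    (hS : UniqueDiffOn ℝ S) (hg : ∀ s ∈ S, AnalyticAt ℂ g s) (hfg : ∀ s ∈ S, (f s : ℂ) = g s)
    (m : ℕ) {t : ℝ} (ht : t ∈ S) :
    ((iteratedDerivWithin m f S t : ℝ) : ℂ) = iteratedDeriv m g t := by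
  induction m generalizing t with
  | zero => simpa only [iteratedDerivWithin_zero, iteratedDeriv_zero] using hfg t ht
  | succ m ih =>
    have hgm : HasDerivAt (iteratedDeriv m g) (iteratedDeriv (m + 1) g t) t := by
      rw [iteratedDeriv_succ, iteratedDeriv_eq_iterate]
      exact ((hg t ht).iterated_deriv m).differentiableAt.hasDerivAt
    have hre : HasDerivWithinAt (iteratedDerivWithin m f S) (iteratedDeriv (m + 1) g t).re S t :=
      hgm.real_of_complex.hasDerivWithinAt.congr_of_mem
        (fun s hs => by rw [← ih hs, Complex.ofReal_re]) ht
    have hcomplex : HasDerivWithinAt (fun s => ((iteratedDerivWithin m f S s : ℝ) : ℂ))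
        (iteratedDeriv (m + 1) g t) S t :=
      hgm.comp_ofReal.hasDerivWithinAt.congr_of_mem (fun s hs => ih hs) ht
    rw [iteratedDerivWithin_succ, hre.derivWithin (hS t ht)]
    exact (hS t ht).eq_deriv S hre.ofReal_comp hcomplex

section HeatMode

open Complex

lemma ofReal_div_cpow {r : ℝ} (hr : 0 < r) {z : ℂ} (hz : z ∈ slitPlane) (a : ℂ) :
    (r / z) ^ a = r ^ a * z ^ (-a) := by
  have hr₀ : (r : ℂ) ≠ 0 := ofReal_ne_zero.2 hr.ne'
  have hz₀ : z ≠ 0 := slitPlane_ne_zero hz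
  rw [div_eq_mul_inv, cpow_def_of_ne_zero (mul_ne_zero hr₀ (inv_ne_zero hz₀)),
    log_ofReal_mul hr (inv_ne_zero hz₀), log_inv _ (slitPlane_arg_ne_pi hz),
    cpow_def_of_ne_zero hr₀, cpow_def_of_ne_zero hz₀, ← exp_add, ofReal_log hr.le]
  ring_nf

/-- The mode of frequency `l` of the heat equation `∂u/∂z = ∂²u/∂x²`, with position `x` and
time `z` allowed to be complex. -/
noncomputable def heatMode (x z : ℂ) (l : ℝ) : ℂ :=
  exp (I * l * x - l ^ 2 * z)

/-- The `k`-th frequency moment of the heat modes, equal to `0` by convention of the Bochner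
integral where the integrand is not integrable. -/
noncomputable def heatMoment (k : ℕ) (x z : ℂ) : ℂ :=
  ∫ l : ℝ, (l : ℂ) ^ k * heatMode x z l

variable {x z : ℂ} {l : ℝ}

lemma continuous_pow_mul_heatMode (k : ℕ) :
    Continuous fun l : ℝ => (l : ℂ) ^ k * heatMode x z l := by
  unfold heatMode
  fun_prop

lemma norm_heatMode : ‖heatMode x z l‖ = Real.exp (-(l * x.im) - l ^ 2 * z.re) := by
  rw [heatMode, norm_exp]
  congr 1
  simp [← ofReal_pow]

lemma integrable_heatMode (hz : 0 < z.re) : Integrable (heatMode x z) := by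
  refine (integrable_cexp_quadratic hz (I * x) 0).congr (.of_forall fun l => ?_)
  simp only [heatMode]
  ring_nf

-- Shifting `x` by `±i` multiplies the mode by `exp (∓l)`, which absorbs the polynomial factor.
lemma norm_pow_mul_heatMode_le (k : ℕ) :
    ‖(l : ℂ) ^ k * heatMode x z l‖ ≤
      k.factorial * (‖heatMode (x + I) z l‖ + ‖heatMode (x - I) z l‖) := by
  have hpow : |l| ^ k ≤ k.factorial * (Real.exp (-l) + Real.exp l) := by
    have h := Real.pow_div_factorial_le_exp |l| (abs_nonneg l) k
    rw [div_le_iff₀' (by positivity)] at h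
    refine h.trans ?_
    gcongr
    exact (Real.exp_abs_le l).trans_eq (add_comm _ _)
  calc ‖(l : ℂ) ^ k * heatMode x z l‖
      = |l| ^ k * Real.exp (-(l * x.im) - l ^ 2 * z.re) := by
        rw [norm_mul, norm_pow, norm_real, Real.norm_eq_abs, norm_heatMode]
    _ ≤ k.factorial * (Real.exp (-l) + Real.exp l) * Real.exp (-(l * x.im) - l ^ 2 * z.re) := by
        gcongr
    _ = k.factorial * (‖heatMode (x + I) z l‖ + ‖heatMode (x - I) z l‖) := by
        simp only [norm_heatMode, mul_assoc, add_mul, ← Real.exp_add, add_im, sub_im, I_im]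
        ring_nf

lemma integrable_pow_mul_heatMode (k : ℕ) (hz : 0 < z.re) :
    Integrable fun l : ℝ => (l : ℂ) ^ k * heatMode x z l :=
  (((integrable_heatMode hz).norm.add (integrable_heatMode hz).norm).const_mul _).mono'
    (continuous_pow_mul_heatMode k).aestronglyMeasurable
    (.of_forall fun _ => norm_pow_mul_heatMode_le k)

lemma hasDerivAt_heatMode_time :
    HasDerivAt (fun z => heatMode x z l) (-(l : ℂ) ^ 2 * heatMode x z l) z := by
  have h : HasDerivAt (fun z : ℂ => I * l * x - l ^ 2 * z) (-((l : ℂ) ^ 2 * 1)) z :=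
    ((hasDerivAt_id z).const_mul _).const_sub _
  convert! h.cexp using 1
  rw [heatMode]
  ring

lemma hasDerivAt_heatMode_frequency :
    HasDerivAt (heatMode x z) (I * x * heatMode x z l - 2 * z * (l * heatMode x z l)) l := by
  have hl : HasDerivAt (fun l : ℝ => (l : ℂ)) 1 l := ofRealCLM.hasDerivAt
  convert! (((hl.const_mul I).mul_const x).sub ((hl.fun_pow 2).mul_const z)).cexp using 1
  simp only [heatMode, Pi.sub_apply]
  push_cast
  ring

lemma hasDerivAt_heatMoment (k : ℕ) (hz : 0 < z.re) :
    HasDerivAt (heatMoment k x) (-heatMoment (k + 2) x z) z := by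
  have hhalf : 0 < (z / 2).re := by simpa using hz
  have hnhds : {s : ℂ | (z / 2).re < s.re} ∈ nhds z :=
    (isOpen_re_gt _).mem_nhds (by simpa using hz)
  have hmeas (j : ℕ) (s : ℂ) : AEStronglyMeasurable fun l : ℝ => (l : ℂ) ^ j * heatMode x s l :=
    (continuous_pow_mul_heatMode j).aestronglyMeasurable
  have hbound (l : ℝ) (s : ℂ) (hs : (z / 2).re < s.re) :
      ‖-((l : ℂ) ^ (k + 2) * heatMode x s l)‖ ≤ ‖(l : ℂ) ^ (k + 2) * heatMode x (z / 2) l‖ := by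
    rw [norm_neg, norm_mul, norm_mul, norm_heatMode, norm_heatMode]
    gcongr
  have hderiv (l : ℝ) (s : ℂ) : HasDerivAt (fun s => (l : ℂ) ^ k * heatMode x s l)
      (-((l : ℂ) ^ (k + 2) * heatMode x s l)) s :=
    (hasDerivAt_heatMode_time.const_mul _).congr_deriv (by ring)
  have h := (hasDerivAt_integral_of_dominated_loc_of_deriv_le hnhds (.of_forall (hmeas k))
    (integrable_pow_mul_heatMode k hz) (hmeas (k + 2) z).neg
    (.of_forall hbound) (integrable_pow_mul_heatMode (k + 2) hhalf).norm
    (.of_forall fun l s _ => hderiv l s)).2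
  rwa [integral_neg] at h

theorem iteratedDeriv_heatMoment (m k : ℕ) (hz : 0 < z.re) :
    iteratedDeriv m (heatMoment k x) z = (-1) ^ m * heatMoment (k + 2 * m) x z := by
  induction m generalizing z with
  | zero => simp
  | succ m ih =>
    have hloc : iteratedDeriv m (heatMoment k x) =ᶠ[nhds z]
        fun s => (-1) ^ m * heatMoment (k + 2 * m) x s :=
      ((isOpen_re_gt 0).eventually_mem hz).mono fun s hs => ih hs
    rw [iteratedDeriv_succ, hloc.deriv_eq, ((hasDerivAt_heatMoment _ hz).const_mul _).deriv]
    ring_nf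

lemma heatMoment_zero (hz : 0 < z.re) :
    heatMoment 0 x z = (Real.pi / z) ^ (1 / 2 : ℂ) * exp (-x ^ 2 / (4 * z)) := by
  rw [← fourierIntegral_gaussian hz, heatMoment]
  congr with l
  rw [pow_zero, one_mul, heatMode, ← exp_add]
  ring_nf

lemma two_mul_heatMoment_one (hz : 0 < z.re) :
    2 * z * heatMoment 1 x z = I * x * heatMoment 0 x z := by
  have hint₀ := integrable_heatMode (x := x) hz
  have hint₁ : Integrable fun l : ℝ => (l : ℂ) * heatMode x z l := by
    simpa only [pow_one] using integrable_pow_mul_heatMode (x := x) 1 hz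
  have h := integral_eq_zero_of_hasDerivAt_of_integrable
    (fun _ => hasDerivAt_heatMode_frequency)
    ((hint₀.const_mul (I * x)).sub (hint₁.const_mul (2 * z))) hint₀
  rw [integral_sub (hint₀.const_mul _) (hint₁.const_mul _), integral_const_mul,
    integral_const_mul, sub_eq_zero] at h
  simpa only [heatMoment, pow_zero, pow_one, one_mul] using h.symm

lemma heatMoment_one (hz : 0 < z.re) :
    heatMoment 1 x z =
      I * x * Real.sqrt Real.pi / 2 * (z ^ (-3 / 2 : ℂ) * exp (-x ^ 2 / (4 * z))) := by
  have hslit : z ∈ slitPlane := .inl hz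
  have hz₀ : z ≠ 0 := slitPlane_ne_zero hslit
  have hsqrt : (Real.pi : ℂ) ^ (1 / 2 : ℂ) = Real.sqrt Real.pi := by
    rw [Real.sqrt_eq_rpow, ofReal_cpow Real.pi_pos.le]
    norm_num
  have hpow : z ^ (-(1 / 2) : ℂ) = z ^ (-3 / 2 : ℂ) * z := by
    rw [show (-(1 / 2) : ℂ) = -3 / 2 + 1 by norm_num, cpow_add _ _ hz₀, cpow_one]
  have hrec := two_mul_heatMoment_one (x := x) hz
  rw [heatMoment_zero hz, ofReal_div_cpow Real.pi_pos hslit, hsqrt, hpow] at hrec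
  refine mul_left_cancel₀ (mul_ne_zero two_ne_zero hz₀) (hrec.trans ?_)
  ring

end HeatMode

theorem heat_counterexample_sequence_integral_general (m : ℕ) (x : ℂ) {z : ℂ} (hz : 0 < z.re) :
    Integrable (fun l : ℝ =>
      (-(l : ℂ) ^ 2) ^ m * (l : ℂ) * Complex.exp (Complex.I * l * x - (l : ℂ) ^ 2 * z)) ∧
    -(Complex.I / Real.pi) *
        ∫ l : ℝ, (-(l : ℂ) ^ 2) ^ m * (l : ℂ) * Complex.exp (Complex.I * l * x - (l : ℂ) ^ 2 * z)
      = x / (2 * Real.sqrt Real.pi) *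
          iteratedDeriv m (fun s : ℂ => s ^ (-3 / 2 : ℂ) * Complex.exp (-x ^ 2 / (4 * s))) z := by
  have hmode (l : ℝ) :
      (-(l : ℂ) ^ 2) ^ m * (l : ℂ) * Complex.exp (Complex.I * l * x - (l : ℂ) ^ 2 * z) =
        (-1) ^ m * ((l : ℂ) ^ (1 + 2 * m) * heatMode x z l) := by
    rw [heatMode, neg_pow]
    ring
  have hprofile : heatMoment 1 x =ᶠ[nhds z] fun s => Complex.I * x * Real.sqrt Real.pi / 2 *
      (s ^ (-3 / 2 : ℂ) * Complex.exp (-x ^ 2 / (4 * s))) :=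
    ((Complex.isOpen_re_gt 0).eventually_mem hz).mono fun s hs => heatMoment_one hs
  simp only [hmode]
  refine ⟨(integrable_pow_mul_heatMode _ hz).const_mul _, ?_⟩
  rw [integral_const_mul, ← heatMoment, ← iteratedDeriv_heatMoment m 1 hz,
    hprofile.iteratedDeriv_eq, iteratedDeriv_const_mul_field, ← mul_assoc]
  congr 1
  have hpi : (Real.pi : ℂ) = (Real.sqrt Real.pi : ℂ) ^ 2 :=
    mod_cast (Real.sq_sqrt Real.pi_pos.le).symm
  have hsqrt : (Real.sqrt Real.pi : ℂ) ≠ 0 := mod_cast (Real.sqrt_pos.2 Real.pi_pos).ne'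
  rw [hpi]
  field_simp
  rw [Complex.I_sq]
  ring

lemma ofReal_iteratedDerivWithin_rpow_mul_exp (m : ℕ) (x : ℝ) {t : ℝ} (ht : 0 < t) :
    ((iteratedDerivWithin m
        (fun s : ℝ => s ^ (-(3 : ℝ) / 2) * Real.exp (-(x ^ 2) / (4 * s))) (Ioi 0) t : ℝ) : ℂ) =
      iteratedDeriv m
        (fun s : ℂ => s ^ (-3 / 2 : ℂ) * Complex.exp (-(x : ℂ) ^ 2 / (4 * s))) t := by
  refine ofReal_iteratedDerivWithin_of_eqOn (uniqueDiffOn_Ioi 0) (fun s hs => ?_) (fun s hs => ?_)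
    m ht
  · have hslit : (s : ℂ) ∈ Complex.slitPlane := Complex.ofReal_mem_slitPlane.2 hs
    have hs₀ : (4 * s : ℂ) ≠ 0 := by simpa using Complex.slitPlane_ne_zero hslit
    fun_prop (disch := assumption)
  · rw [Complex.ofReal_mul, Complex.ofReal_cpow (le_of_lt hs)]
    push_cast
    rfl

/-- For integers `n ≥ 1`, `x > 0`, `t > 0`, the integrand
`λ ↦ (−λ²)^{n−1}·λ·exp(iλx − λ²t)` is absolutely integrable on `ℝ` and
`−(i/π) ∫_ℝ (−λ²)^{n−1}·λ·exp(iλx − λ²t) dλ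
  = (x/(2√π)) · (d^{n−1}/ds^{n−1})[ s^{−3/2}·exp(−x²/(4s)) ]|_{s=t}`,
the `(n−1)`-st derivative being taken with respect to the time variable on `(0,∞)`. -/
theorem heat_counterexample_sequence_integral (n : ℕ) (hn : 1 ≤ n) (x t : ℝ)
    (hx : 0 < x) (ht : 0 < t) :
    Integrable (fun l : ℝ =>
      (-(l : ℂ) ^ 2) ^ (n - 1) * (l : ℂ) *
        Complex.exp (Complex.I * (l : ℂ) * (x : ℂ) - (l : ℂ) ^ 2 * (t : ℂ))) ∧
    -(Complex.I / (Real.pi : ℂ)) *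
        ∫ l : ℝ, (-(l : ℂ) ^ 2) ^ (n - 1) * (l : ℂ) *
          Complex.exp (Complex.I * (l : ℂ) * (x : ℂ) - (l : ℂ) ^ 2 * (t : ℂ))
      = ((x / (2 * Real.sqrt Real.pi) *
          iteratedDerivWithin (n - 1)
            (fun s : ℝ => s ^ (-(3 : ℝ) / 2) * Real.exp (-(x ^ 2) / (4 * s)))
            (Ioi 0) t : ℝ) : ℂ) := by
  rw [Complex.ofReal_mul, ofReal_iteratedDerivWithin_rpow_mul_exp (n - 1) x ht]
  simpa using
    heat_counterexample_sequence_integral_general (n - 1) x (z := (t : ℂ)) (by simpa using ht)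
end

section
/- For every (x,t) in the open quarter-plane Q, the partial derivative with respect to t of v(x,t) = (i/π) · lim_{R→∞} ∫_{−R}^{R} exp(iλx) · (exp(−λ²t) − 1) · λ^{−1} dλ equals x/(2√π · t^{3/2}) · exp(−x²/(4t)). -/
open MeasureTheory Filter Set

/-!
The integrand decays only like `1/λ`, because of the term `-1`; but that term cancels in
`v(x,s) - v(x,t)`, which is therefore an absolutely convergent integral. Differentiating it in `s`
under the integral sign cancels the factor `1/λ` and leaves the first moment of an oscillating
Gaussian. Integrating the derivative of `exp(ixλ - tλ²)` over the line expresses this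
moment by the Fourier transform of the Gaussian.
-/

section ImproperIntegral

open Topology

variable {α ι 𝕜 E : Type*} [MeasurableSpace α] {μ : Measure α} {l : Filter ι} {φ : ι → Set α}
  [RCLike 𝕜] [NormedAddCommGroup E] [NormedSpace 𝕜 E] {F F' : 𝕜 → α → E} {bound : α → ℝ}
  {s : Set 𝕜}

theorem integrable_sub_of_norm_hasDerivAt_le {x y : 𝕜} (hs : Convex ℝ s) (hx : x ∈ s)
    (hy : y ∈ s) (hFx : AEStronglyMeasurable (F x) μ) (hFy : AEStronglyMeasurable (F y) μ)
    (h_bound : ∀ᵐ a ∂μ, ∀ z ∈ s, ‖F' z a‖ ≤ bound a) (bound_integrable : Integrable bound μ)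
    (h_diff : ∀ᵐ a ∂μ, ∀ z ∈ s, HasDerivAt (F · a) (F' z a) z) :
    Integrable (fun a ↦ F y a - F x a) μ := by
  refine (bound_integrable.mul_const ‖y - x‖).mono' (hFy.sub hFx) ?_
  filter_upwards [h_bound, h_diff] with a ha_bound ha_diff
  exact hs.norm_image_sub_le_of_norm_hasDerivWithin_le
    (fun z hz ↦ (ha_diff z hz).hasDerivWithinAt) ha_bound hx hy

theorem hasDerivAt_of_tendsto_setIntegral_of_dominated [NormedSpace ℝ E] [l.NeBot]
    [l.IsCountablyGenerated] (hφ : AECover μ l φ) {v : 𝕜 → E} {x₀ : 𝕜} (hs : s ∈ 𝓝 x₀)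
    (hF_int : ∀ x ∈ s, ∀ i, IntegrableOn (F x) (φ i) μ)
    (hF_lim : ∀ x ∈ s, Tendsto (fun i ↦ ∫ a in φ i, F x a ∂μ) l (𝓝 (v x)))
    (hF'_meas : AEStronglyMeasurable (F' x₀) μ)
    (h_bound : ∀ᵐ a ∂μ, ∀ x ∈ s, ‖F' x a‖ ≤ bound a) (bound_integrable : Integrable bound μ)
    (h_diff : ∀ᵐ a ∂μ, ∀ x ∈ s, HasDerivAt (F · a) (F' x a) x) :
    HasDerivAt v (∫ a, F' x₀ a ∂μ) x₀ := by
  obtain ⟨ε, hε, hball⟩ := Metric.mem_nhds_iff.1 hs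
  have hx₀ : x₀ ∈ Metric.ball x₀ ε := Metric.mem_ball_self hε
  have hF_meas : ∀ x ∈ s, AEStronglyMeasurable (F x) μ := fun x hx ↦
    hφ.aestronglyMeasurable fun i ↦ (hF_int x hx i).aestronglyMeasurable
  have hsub_int : ∀ x ∈ Metric.ball x₀ ε, Integrable (fun a ↦ F x a - F x₀ a) μ := fun x hx ↦
    integrable_sub_of_norm_hasDerivAt_le (convex_ball x₀ ε) hx₀ hx (hF_meas x₀ (hball hx₀))
      (hF_meas x (hball hx)) (h_bound.mono fun a ha z hz ↦ ha z (hball hz)) bound_integrable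
      (h_diff.mono fun a ha z hz ↦ ha z (hball hz))
  have hv : ∀ x ∈ Metric.ball x₀ ε, v x = v x₀ + ∫ a, F x a - F x₀ a ∂μ := by
    intro x hx
    have hlim := (hF_lim x (hball hx)).sub (hF_lim x₀ (hball hx₀))
    refine eq_add_of_sub_eq' (tendsto_nhds_unique hlim ?_)
    refine (hφ.integral_tendsto_of_countably_generated (hsub_int x hx)).congr fun i ↦ ?_
    exact integral_sub (hF_int x (hball hx) i) (hF_int x₀ (hball hx₀) i)
  have hderiv := (hasDerivAt_integral_of_dominated_loc_of_deriv_le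
    (F := fun x a ↦ F x a - F x₀ a) (F' := F') (Metric.ball_mem_nhds x₀ hε)
    (eventually_of_mem (Metric.ball_mem_nhds x₀ hε) fun x hx ↦
      (hsub_int x hx).aestronglyMeasurable) (hsub_int x₀ hx₀) hF'_meas
    (h_bound.mono fun a ha z hz ↦ ha z (hball hz)) bound_integrable
    (h_diff.mono fun a ha z hz ↦ (ha z (hball hz)).sub_const _)).2
  exact (hderiv.const_add (v x₀)).congr_of_eventuallyEq
    (eventually_of_mem (Metric.ball_mem_nhds x₀ hε) hv)

end ImproperIntegral

section GaussianMoment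

open Complex

variable {b : ℂ}

theorem integrable_cexp_mul_gaussian (hb : 0 < b.re) (c : ℂ) :
    Integrable fun x : ℝ ↦ cexp (c * x) * cexp (-b * (x : ℂ) ^ 2) := by
  have := integrable_cexp_quadratic' (b := -b) (by simpa using hb) c 0
  refine this.congr (ae_of_all _ fun x ↦ ?_)
  simp only [← Complex.exp_add]
  ring_nf

theorem integrable_mul_cexp_mul_gaussian (hb : 0 < b.re) (c : ℂ) :
    Integrable fun x : ℝ ↦ x * (cexp (c * x) * cexp (-b * (x : ℂ) ^ 2)) := by
  refine ((integrable_cexp_mul_gaussian hb (c + 1)).norm.add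
    (integrable_cexp_mul_gaussian hb (c - 1)).norm).mono' (by fun_prop) (ae_of_all _ fun x ↦ ?_)
  have habs : |x| ≤ Real.exp x + Real.exp (-x) :=
    (le_add_of_nonneg_right zero_le_one).trans ((Real.add_one_le_exp |x|).trans (Real.exp_abs_le x))
  calc ‖x * (cexp (c * x) * cexp (-b * (x : ℂ) ^ 2))‖
      = |x| * ‖cexp (c * x) * cexp (-b * (x : ℂ) ^ 2)‖ := by
        rw [norm_mul, norm_real, Real.norm_eq_abs]
    _ ≤ (Real.exp x + Real.exp (-x)) * ‖cexp (c * x) * cexp (-b * (x : ℂ) ^ 2)‖ := by gcongr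
    _ = ‖cexp ((c + 1) * x) * cexp (-b * (x : ℂ) ^ 2)‖
        + ‖cexp ((c - 1) * x) * cexp (-b * (x : ℂ) ^ 2)‖ := by
        have hneg : ‖cexp (-(x : ℂ))‖ = Real.exp (-x) := by rw [← ofReal_neg, norm_exp_ofReal]
        simp only [add_mul, neg_mul, one_mul, sub_eq_add_neg, Complex.exp_add, norm_mul,
          norm_exp_ofReal, hneg]
        ring

theorem hasDerivAt_cexp_mul_gaussian (b c : ℂ) (x : ℝ) :
    HasDerivAt (fun x : ℝ ↦ cexp (c * x) * cexp (-b * (x : ℂ) ^ 2))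
      (c * (cexp (c * x) * cexp (-b * (x : ℂ) ^ 2))
        - 2 * b * (x * (cexp (c * x) * cexp (-b * (x : ℂ) ^ 2)))) x := by
  have hx : HasDerivAt (fun x : ℝ ↦ (x : ℂ)) 1 x := ofRealCLM.hasDerivAt
  refine ((hx.const_mul c).cexp.mul ((hx.fun_pow 2).const_mul (-b)).cexp).congr_deriv ?_
  simp only [Nat.cast_ofNat, Nat.add_one_sub_one, pow_one, mul_one]
  ring

theorem integral_mul_cexp_mul_gaussian (hb : 0 < b.re) (c : ℂ) :
    ∫ x : ℝ, x * (cexp (c * x) * cexp (-b * (x : ℂ) ^ 2))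
      = c / (2 * b) * ∫ x : ℝ, cexp (c * x) * cexp (-b * (x : ℂ) ^ 2) := by
  have hb₀ : b ≠ 0 := fun h ↦ by simp [h] at hb
  have hint := (integrable_cexp_mul_gaussian hb c).const_mul c
  have hint_mul := (integrable_mul_cexp_mul_gaussian hb c).const_mul (2 * b)
  have hparts := integral_eq_zero_of_hasDerivAt_of_integrable
    (hasDerivAt_cexp_mul_gaussian b c) (hint.sub hint_mul) (integrable_cexp_mul_gaussian hb c)
  rw [integral_sub hint hint_mul, integral_const_mul, integral_const_mul, sub_eq_zero] at hparts
  rw [div_mul_eq_mul_div, hparts, mul_div_cancel_left₀ _ (mul_ne_zero two_ne_zero hb₀)]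

theorem norm_mul_cexp_I_mul_gaussian (x t l : ℝ) :
    ‖(l : ℂ) * (cexp (I * x * l) * cexp (-t * (l : ℂ) ^ 2))‖ = |l| * Real.exp (-t * l ^ 2) := by
  have hphase : I * x * l = ((x * l : ℝ) : ℂ) * I := by push_cast; ring
  have hgauss : -(t : ℂ) * (l : ℂ) ^ 2 = ((-t * l ^ 2 : ℝ) : ℂ) := by push_cast; rfl
  rw [norm_mul, norm_mul, hphase, hgauss, norm_exp_ofReal_mul_I, norm_exp_ofReal, one_mul,
    norm_real, Real.norm_eq_abs]

theorem integral_mul_cexp_I_mul_gaussian {t : ℝ} (ht : 0 < t) (x : ℝ) :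
    ∫ l : ℝ, l * (cexp (I * x * l) * cexp (-t * (l : ℂ) ^ 2))
      = I * ((x / (2 * t) * (√(Real.pi / t) * Real.exp (-(x ^ 2) / (4 * t))) : ℝ) : ℂ) := by
  have hsqrt : (Real.pi / t : ℂ) ^ (1 / 2 : ℂ) = (√(Real.pi / t) : ℝ) := by
    rw [Real.sqrt_eq_rpow, ofReal_cpow (by positivity)]
    push_cast
    rfl
  have hre : 0 < (t : ℂ).re := ht
  rw [integral_mul_cexp_mul_gaussian hre, fourierIntegral_gaussian hre, hsqrt]
  push_cast
  ring

end GaussianMoment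

section HeatStepKernel

open Complex

/-- The integrand `exp(iλx) · (exp(-λ²t) - 1) / λ` of the solution formula, at the frequency
`l = λ`. Its junk value `0` at `l = 0` is also its limit there. -/
noncomputable def heatStepKernel (x t l : ℝ) : ℂ :=
  cexp (I * l * x) * (cexp (-(l : ℂ) ^ 2 * t) - 1) * (l : ℂ)⁻¹

theorem continuous_heatStepKernel (x t : ℝ) : Continuous (heatStepKernel x t) := by
  let f : ℝ → ℂ := fun l ↦ cexp (-(l : ℂ) ^ 2 * t) - 1
  have hf₀ : f 0 = 0 := by simp [f]
  have hsq : HasDerivAt (fun l : ℝ ↦ (l : ℂ) ^ 2) 0 0 := by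
    simpa using (ofRealCLM.hasDerivAt (x := 0)).fun_pow 2
  have hf : HasDerivAt f 0 0 :=
    ((hsq.fun_neg.mul_const (t : ℂ)).cexp.sub_const 1).congr_deriv (by simp)
  have hslope : heatStepKernel x t = fun l : ℝ ↦ cexp (I * l * x) * dslope f 0 l := by
    funext l
    rcases eq_or_ne l 0 with rfl | hl
    · simp [heatStepKernel, hf.deriv]
    · rw [dslope_of_ne _ hl, slope_def_module, hf₀, sub_zero, sub_zero, real_smul, ofReal_inv,
        mul_comm (l : ℂ)⁻¹, ← mul_assoc]
      rfl
  have hdslope : Continuous (dslope f 0) := continuousOn_univ.1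
    ((continuousOn_dslope univ_mem).2 ⟨by fun_prop, hf.differentiableAt⟩)
  rw [hslope]
  fun_prop

theorem hasDerivAt_heatStepKernel (x t l : ℝ) :
    HasDerivAt (fun s ↦ heatStepKernel x s l)
      (-(l * (cexp (I * x * l) * cexp (-t * (l : ℂ) ^ 2)))) t := by
  have ht : HasDerivAt (fun s : ℝ ↦ -(l : ℂ) ^ 2 * s) (-(l : ℂ) ^ 2 * 1) t :=
    ofRealCLM.hasDerivAt.const_mul _
  refine (((ht.cexp.sub_const 1).const_mul (cexp (I * l * x))).mul_const (l : ℂ)⁻¹).congr_deriv ?_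
  rw [mul_right_comm I (l : ℂ), neg_mul_comm, mul_comm _ (-(t : ℂ))]
  rcases eq_or_ne (l : ℂ) 0 with hl | hl
  · simp [hl]
  · field_simp

theorem hasDerivAt_of_tendsto_integral_heatStepKernel {x : ℝ} {c : ℂ} {v : ℝ → ℂ}
    (hv : ∀ t : ℝ, 0 < t →
      Tendsto (fun R : ℝ ↦ c * ∫ l in (-R)..R, heatStepKernel x t l) atTop (nhds (v t)))
    {t : ℝ} (ht : 0 < t) :
    HasDerivAt v (c * -∫ l : ℝ, l * (cexp (I * x * l) * cexp (-t * (l : ℂ) ^ 2))) t := by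
  rw [← integral_neg, ← integral_const_mul]
  have hpos : ∀ s ∈ Ioi (t / 2), 0 < s := fun s hs ↦ (half_pos ht).trans hs
  refine hasDerivAt_of_tendsto_setIntegral_of_dominated
    (F := fun s l ↦ c * heatStepKernel x s l)
    (bound := fun l ↦ ‖c‖ * (|l| * Real.exp (-(t / 2) * l ^ 2)))
    (aecover_Ioc tendsto_neg_atTop_atBot tendsto_id) (Ioi_mem_nhds (half_lt_self ht))
    (fun s _ R ↦ ?int) (fun s hs ↦ ?lim) (by fun_prop) (ae_of_all _ fun l s hs ↦ ?bound)
    (.const_mul ?bound_int _)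
    (ae_of_all _ fun l s _ ↦ (hasDerivAt_heatStepKernel x s l).const_mul c)
  case int => exact ((continuous_heatStepKernel x s).const_mul c).integrableOn_Ioc
  case lim =>
    refine (hv s (hpos s hs)).congr' ?_
    filter_upwards [eventually_ge_atTop 0] with R hR
    rw [intervalIntegral.integral_of_le (neg_le_self hR), integral_const_mul, id]
  case bound =>
    rw [norm_mul, norm_neg, norm_mul_cexp_I_mul_gaussian]
    gcongr
    exact (mem_Ioi.1 hs).le
  case bound_int =>
    simpa using (integrable_mul_exp_neg_mul_sq (half_pos ht)).norm

end HeatStepKernel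

theorem div_two_mul_sqrt_pi_mul_rpow {t : ℝ} (ht : 0 < t) (x : ℝ) :
    x / (2 * √Real.pi * t ^ ((3 : ℝ) / 2)) = Real.pi⁻¹ * (x / (2 * t) * √(Real.pi / t)) := by
  have hrpow : t ^ ((3 : ℝ) / 2) = t * √t := by
    rw [Real.sqrt_eq_rpow, ← Real.rpow_one_add' ht.le (by norm_num)]
    norm_num
  have hpi : √Real.pi ^ 2 = Real.pi := Real.sq_sqrt Real.pi_pos.le
  rw [hrpow, Real.sqrt_div Real.pi_pos.le]
  field_simp
  rw [hpi]

theorem heat_dirichlet_step_solution_time_derivative_general {x : ℝ} {v : ℝ → ℂ}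
    (hv : ∀ t : ℝ, 0 < t →
      Tendsto (fun R : ℝ =>
          Complex.I / (Real.pi : ℂ) *
            ∫ l in (-R)..R, Complex.exp (Complex.I * (l : ℂ) * (x : ℂ)) *
              (Complex.exp (-(l : ℂ) ^ 2 * (t : ℂ)) - 1) * (l : ℂ)⁻¹)
        atTop (nhds (v t)))
    {t : ℝ} (ht : 0 < t) :
    HasDerivAt v
      ((x / (2 * Real.sqrt Real.pi * t ^ ((3 : ℝ) / 2)) *
        Real.exp (-(x ^ 2) / (4 * t)) : ℝ) : ℂ) t := by
  refine (hasDerivAt_of_tendsto_integral_heatStepKernel hv ht).congr_deriv ?_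
  rw [integral_mul_cexp_I_mul_gaussian ht, div_two_mul_sqrt_pi_mul_rpow ht]
  push_cast
  linear_combination (-(Real.pi : ℂ)⁻¹ * (x / (2 * t) * (√(Real.pi / t) : ℝ)
    * Complex.exp (-(x : ℂ) ^ 2 / (4 * t)))) * Complex.I_mul_I

/-- If `v(x,t) = (i/π)·lim_{R→∞} ∫_{−R}^{R} e^{iλx}(e^{−λ²t} − 1) λ⁻¹ dλ` on the open
quarter-plane `Q`, then at every point of `Q` its partial derivative with respect to `t`
equals `x/(2√π·t^{3/2})·exp(−x²/(4t))`. -/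
theorem heat_dirichlet_step_solution_time_derivative (v : ℝ → ℝ → ℂ)
    (hv : ∀ x t : ℝ, 0 < x → 0 < t →
      Tendsto (fun R : ℝ =>
          Complex.I / (Real.pi : ℂ) *
            ∫ l in (-R)..R, Complex.exp (Complex.I * (l : ℂ) * (x : ℂ)) *
              (Complex.exp (-(l : ℂ) ^ 2 * (t : ℂ)) - 1) * (l : ℂ)⁻¹)
        atTop (nhds (v x t))) :
    ∀ x t : ℝ, 0 < x → 0 < t →
      deriv (fun s => v x s) t
        = ((x / (2 * Real.sqrt Real.pi * t ^ ((3 : ℝ) / 2)) *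
            Real.exp (-(x ^ 2) / (4 * t)) : ℝ) : ℂ) := by
  intro x t hx ht
  exact (heat_dirichlet_step_solution_time_derivative_general (fun s hs => hv x s hx hs) ht).deriv
end

section
/- The function v(x,t) = −(3/(2πi)) ∫_{s∈ℝ} exp( i(s+i)x + i(s+i)³ t ) · (s+i)^{−1} ds (i.e. v_ε with ε = 1) is smooth on the open quarter-plane Q, satisfies the linear KdV equation ∂v/∂t = −∂³v/∂x³ at every point of Q, and satisfies lim_{x→0⁺} v(x,t) = 1 for every t > 0 and lim_{t→0⁺} v(x,t) = 0 for every x > 0. -/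
open MeasureTheory Filter Set

/-- `v_ε(x,t) = −(3/(2πi)) ∫_{s∈ℝ} exp(i(s+iε)x + i(s+iε)³t) · (s+iε)⁻¹ ds`,
the parametrization over `s ∈ ℝ` of the contour integral over the line `Im λ = ε`. -/
noncomputable def kdvStepSol (ε : ℝ) : ℝ → ℝ → ℂ := fun x t =>
  -(3 / (2 * (Real.pi : ℂ) * Complex.I)) *
    ∫ s : ℝ, Complex.exp (Complex.I * ((s : ℂ) + Complex.I * (ε : ℂ)) * (x : ℂ) +
        Complex.I * ((s : ℂ) + Complex.I * (ε : ℂ)) ^ 3 * (t : ℂ)) *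
      ((s : ℂ) + Complex.I * (ε : ℂ))⁻¹

/-!
Write `λ = s + iε`. On the line `Im λ = ε > 0` the wave `exp(iλx + iλ³t)` has modulus
`exp(-εx + ε³t - 3εts²)`, so for `t > 0` one may differentiate under the integral any number of
times, which gives smoothness and the equation. The same Gaussian decay lets Cauchy's theorem move
the line, so `v_ε` does not depend on `ε`.

* As `t → 0⁺`, take `ε = t^(-1/3)`: then `ε³t = 1`, and the integral is `O(exp(-x t^(-1/3)))`.
* At `x = 0`, put `λ³ = exp w`, so that `dλ / λ = dw / 3`. The entire function `exp(it exp w)` has a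
  primitive `F` with `F(w + 2πi) = F(w) + 2πi`. The argument of `λ³` runs from `3π` down to `0`
  along the line: a full turn contributes `-2πi/3`, and the remaining half turn is negligible, as
  `|exp(itz)|` is at most `exp(-t(3S²ε - ε³))` on the arc from `(S + iε)³` to `-(S - iε)³`.
-/

open scoped Real Topology Interval ComplexConjugate

section ContourShift

variable {E : Type*} [NormedAddCommGroup E]

lemma tendsto_intervalIntegral_zero_of_norm_le [NormedSpace ℝ E] {ι : Type*} {l : Filter ι}
    {f : ι → ℝ → E} {B : ι → ℝ} {a b : ℝ} (hB : Tendsto B l (𝓝 0))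
    (hf : ∀ i, ∀ y ∈ [[a, b]], ‖f i y‖ ≤ B i) :
    Tendsto (fun i => ∫ y in a..b, f i y) l (𝓝 0) := by
  refine squeeze_zero_norm (fun i => intervalIntegral.norm_integral_le_of_norm_le_const
    fun y hy => hf i y (uIoc_subset_uIcc hy)) ?_
  simpa using hB.mul_const |b - a|

lemma integrable_comp_add_mul_I_of_norm_le {f : ℂ → E} {B : ℝ → ℝ} {y : ℝ}
    (hf : ContinuousOn f (Complex.im ⁻¹' {y})) (hB : Integrable B)
    (hfB : ∀ s : ℝ, ‖f (s + y * Complex.I)‖ ≤ B s) :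
    Integrable fun s : ℝ => f (s + y * Complex.I) := by
  refine hB.mono' (Continuous.aestronglyMeasurable ?_) (ae_of_all _ hfB)
  exact hf.comp_continuous (by fun_prop) fun s => by simp

theorem integral_comp_add_mul_I_eq_of_norm_le [NormedSpace ℂ E] [CompleteSpace E] {f : ℂ → E}
    {B : ℝ → ℝ} {a b : ℝ}
    (hf : DifferentiableOn ℂ f (Complex.im ⁻¹' [[a, b]])) (hB : Integrable B)
    (hB0 : Tendsto B (cocompact ℝ) (𝓝 0))
    (hfB : ∀ s : ℝ, ∀ y ∈ [[a, b]], ‖f (s + y * Complex.I)‖ ≤ B s) :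
    ∫ s : ℝ, f (s + a * Complex.I) = ∫ s : ℝ, f (s + b * Complex.I) := by
  have tendsto_horizontal {y : ℝ} (hy : y ∈ [[a, b]]) :
      Tendsto (fun S : ℝ => ∫ s in (-S)..S, f (s + y * Complex.I)) atTop
        (𝓝 (∫ s : ℝ, f (s + y * Complex.I))) :=
    intervalIntegral_tendsto_integral
      (integrable_comp_add_mul_I_of_norm_le
        (hf.continuousOn.mono (preimage_mono (singleton_subset_iff.2 hy))) hB fun s => hfB s y hy)
      tendsto_neg_atTop_atBot tendsto_id
  have tendsto_vertical {l : Filter ℝ} (hl : l ≤ cocompact ℝ) :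
      Tendsto (fun S : ℝ => ∫ y in a..b, f (S + y * Complex.I)) l (𝓝 0) :=
    tendsto_intervalIntegral_zero_of_norm_le (hB0.mono_left hl) hfB
  have tendsto_right := tendsto_vertical atTop_le_cocompact
  have tendsto_left := (tendsto_vertical atBot_le_cocompact).comp tendsto_neg_atTop_atBot
  have rectangle (S : ℝ) := Complex.integral_boundary_rect_eq_zero_of_differentiableOn f
    ⟨-S, a⟩ ⟨S, b⟩ (hf.mono fun z hz => hz.2)
  have key := (((tendsto_horizontal left_mem_uIcc).sub (tendsto_horizontal right_mem_uIcc)).add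
    (tendsto_right.const_smul Complex.I)).sub (tendsto_left.const_smul Complex.I)
  simp only [smul_zero, add_zero, sub_zero] at key
  exact sub_eq_zero.1 (tendsto_nhds_unique key (tendsto_const_nhds.congr fun S =>
    (rectangle S).symm))

end ContourShift

theorem tendsto_exp_neg_mul_sq_cocompact {c : ℝ} (hc : 0 < c) :
    Tendsto (fun s : ℝ => rexp (-c * s ^ 2)) (cocompact ℝ) (𝓝 0) := by
  have sq_atTop : Tendsto (fun s : ℝ => s ^ 2) (cocompact ℝ) atTop := by
    simpa only [Function.comp_def, Real.norm_eq_abs, sq_abs] using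
      (tendsto_pow_atTop two_ne_zero).comp (tendsto_norm_cocompact_atTop (E := ℝ))
  exact Real.tendsto_exp_atBot.comp (sq_atTop.const_mul_atTop_of_neg (neg_lt_zero.2 hc))

section HorizontalLine

/-- The parametrization `s ↦ s + iε` of the line `Im λ = ε`, along which all contour integrals
below are taken. -/
noncomputable def horizontalLine (ε s : ℝ) : ℂ := s + ε * Complex.I

variable {ε : ℝ}

@[simp] lemma horizontalLine_re (ε s : ℝ) : (horizontalLine ε s).re = s := by
  simp [horizontalLine]

@[simp] lemma horizontalLine_im (ε s : ℝ) : (horizontalLine ε s).im = ε := by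
  simp [horizontalLine]

@[fun_prop] lemma continuous_horizontalLine (ε : ℝ) : Continuous (horizontalLine ε) := by
  unfold horizontalLine
  fun_prop

lemma hasDerivAt_horizontalLine (ε s : ℝ) : HasDerivAt (horizontalLine ε) 1 s :=
  Complex.ofRealCLM.hasDerivAt.add_const _

lemma horizontalLine_neg (ε s : ℝ) : horizontalLine ε (-s) = -conj (horizontalLine ε s) := by
  simp [horizontalLine, add_comm]

lemma horizontalLine_ne_zero (hε : ε ≠ 0) (s : ℝ) : horizontalLine ε s ≠ 0 := fun h =>
  hε (by simpa using congrArg Complex.im h)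

lemma norm_inv_horizontalLine_le (hε : 0 < ε) (s : ℝ) : ‖(horizontalLine ε s)⁻¹‖ ≤ ε⁻¹ := by
  rw [norm_inv]
  exact inv_anti₀ hε (by simpa using Complex.im_le_norm (horizontalLine ε s))

lemma continuous_inv_horizontalLine (hε : ε ≠ 0) : Continuous fun s => (horizontalLine ε s)⁻¹ :=
  (continuous_horizontalLine ε).inv₀ (horizontalLine_ne_zero hε)

lemma horizontalLine_pow_three_im (ε s : ℝ) :
    (horizontalLine ε s ^ 3).im = 3 * s ^ 2 * ε - ε ^ 3 := by
  simp only [pow_succ, pow_zero, one_mul, Complex.mul_im, Complex.mul_re, horizontalLine_re,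
    horizontalLine_im]
  ring

lemma norm_horizontalLine_le_mul_exp (ε : ℝ) {c : ℝ} (hc : 0 < c) (s : ℝ) :
    ‖horizontalLine ε s‖ ≤ (1 + |ε| + c⁻¹) * rexp (c * s ^ 2) := by
  have norm_le : ‖horizontalLine ε s‖ ≤ |s| + |ε| := by
    simpa using Complex.norm_le_abs_re_add_abs_im (horizontalLine ε s)
  have abs_le : |s| ≤ 1 + s ^ 2 := by nlinarith [sq_abs s, sq_nonneg (|s| - 1)]
  have one_le : 1 ≤ rexp (c * s ^ 2) := Real.one_le_exp (by positivity)
  have sq_le : s ^ 2 ≤ c⁻¹ * rexp (c * s ^ 2) := by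
    rw [inv_mul_eq_div, le_div_iff₀' hc]
    linarith [Real.add_one_le_exp (c * s ^ 2)]
  nlinarith [abs_nonneg ε]

lemma tendsto_arg_horizontalLine (ε : ℝ) :
    Tendsto (fun s => (horizontalLine ε s).arg) atTop (𝓝 0) := by
  have tendsto_one : Tendsto (fun s : ℝ => 1 + ((ε / s : ℝ) : ℂ) * Complex.I) atTop (𝓝 1) := by
    simpa using ((Complex.continuous_ofReal.tendsto 0).comp
      (tendsto_const_nhds.div_atTop tendsto_id)).mul_const Complex.I |>.const_add 1
  have tendsto_arg := (Complex.continuousAt_arg Complex.one_mem_slitPlane).tendsto.comp tendsto_one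
  rw [Complex.arg_one] at tendsto_arg
  refine tendsto_arg.congr' ?_
  filter_upwards [eventually_gt_atTop 0] with s hs
  have factor : horizontalLine ε s = s * (1 + ((ε / s : ℝ) : ℂ) * Complex.I) := by
    have : (s : ℂ) ≠ 0 := mod_cast hs.ne'
    push_cast [horizontalLine]
    field_simp
  rw [factor, Complex.arg_real_mul _ hs, Function.comp_apply]

end HorizontalLine

section GaussianIntegrable

/-- A weight on the real line is *Gaussian integrable* if its product with every centred Gaussian
is integrable. These are the amplitudes that may be placed in front of the KdV waves. -/
def GaussianIntegrable (a : ℝ → ℂ) : Prop :=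
  ∀ c : ℝ, 0 < c → Integrable fun s : ℝ => (rexp (-c * s ^ 2) : ℂ) * a s

variable {a : ℝ → ℂ}

lemma GaussianIntegrable.aestronglyMeasurable (ha : GaussianIntegrable a) :
    AEStronglyMeasurable a := by
  have h : AEStronglyMeasurable
      (fun s : ℝ => (rexp (1 * s ^ 2) : ℂ) * ((rexp (-1 * s ^ 2) : ℂ) * a s)) :=
    (Continuous.aestronglyMeasurable (by fun_prop)).mul (ha 1 one_pos).aestronglyMeasurable
  refine h.congr (ae_of_all _ fun s => ?_)
  simp only [← mul_assoc, ← Complex.ofReal_mul, ← Real.exp_add]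
  simp

lemma GaussianIntegrable.mul_of_norm_le (ha : GaussianIntegrable a) {g : ℝ → ℂ} {C c : ℝ}
    (hc : 0 < c) (hg : Continuous g) (hgC : ∀ s, ‖g s‖ ≤ C * rexp (-c * s ^ 2)) :
    Integrable fun s => g s * a s := by
  refine ((ha c hc).norm.const_mul C).mono' (hg.aestronglyMeasurable.mul ha.aestronglyMeasurable)
    (ae_of_all _ fun s => ?_)
  rw [norm_mul, norm_mul, Complex.norm_of_nonneg (Real.exp_pos _).le, ← mul_assoc]
  gcongr
  exact hgC s

lemma GaussianIntegrable.of_norm_le {C : ℝ} (ha : Continuous a) (haC : ∀ s, ‖a s‖ ≤ C) :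
    GaussianIntegrable a := fun _ hc =>
  (integrable_exp_neg_mul_sq hc).ofReal.mul_bdd ha.aestronglyMeasurable (ae_of_all _ haC)

lemma GaussianIntegrable.const_mul (ha : GaussianIntegrable a) (z : ℂ) :
    GaussianIntegrable fun s => z * a s := fun c hc => by
  simpa only [mul_left_comm z] using (ha c hc).const_mul z

lemma GaussianIntegrable.horizontalLine_mul (ha : GaussianIntegrable a) (ε : ℝ) :
    GaussianIntegrable fun s => horizontalLine ε s * a s := fun c hc => by
  have bound (s : ℝ) : ‖(rexp (-c * s ^ 2) : ℂ) * horizontalLine ε s‖ ≤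
      (1 + |ε| + (c / 2)⁻¹) * rexp (-(c / 2) * s ^ 2) := by
    rw [norm_mul, Complex.norm_of_nonneg (Real.exp_pos _).le]
    calc rexp (-c * s ^ 2) * ‖horizontalLine ε s‖
        ≤ rexp (-c * s ^ 2) * ((1 + |ε| + (c / 2)⁻¹) * rexp (c / 2 * s ^ 2)) := by
          gcongr
          exact norm_horizontalLine_le_mul_exp ε (half_pos hc) s
      _ = (1 + |ε| + (c / 2)⁻¹) * rexp (-(c / 2) * s ^ 2) := by
          rw [mul_left_comm, ← Real.exp_add]
          ring_nf
  simpa only [mul_assoc] using ha.mul_of_norm_le (half_pos hc) (by fun_prop) bound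

lemma GaussianIntegrable.horizontalLine_pow_mul (ha : GaussianIntegrable a) (ε : ℝ) :
    ∀ n : ℕ, GaussianIntegrable fun s => horizontalLine ε s ^ n * a s
  | 0 => by simpa using ha
  | n + 1 => by
    simpa only [pow_succ', mul_assoc] using (ha.horizontalLine_pow_mul ε n).horizontalLine_mul ε

lemma gaussianIntegrable_inv_horizontalLine {ε : ℝ} (hε : 0 < ε) :
    GaussianIntegrable fun s => (horizontalLine ε s)⁻¹ :=
  .of_norm_le (continuous_inv_horizontalLine hε.ne') (norm_inv_horizontalLine_le hε)

end GaussianIntegrable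

section Waves

/-- The plane wave `exp(iλx + iλ³t)` with complex frequency `λ = z`, at the point `p = (x, t)`. It
solves the linear KdV equation. -/
noncomputable def kdvWave (p : ℝ × ℝ) (z : ℂ) : ℂ :=
  Complex.exp (Complex.I * z * p.1 + Complex.I * z ^ 3 * p.2)

@[fun_prop] lemma differentiable_kdvWave (p : ℝ × ℝ) : Differentiable ℂ (kdvWave p) := by
  unfold kdvWave
  fun_prop

@[fun_prop] lemma continuous_kdvWave (p : ℝ × ℝ) : Continuous (kdvWave p) :=
  (differentiable_kdvWave p).continuous

lemma norm_kdvWave_horizontalLine (p : ℝ × ℝ) (ε s : ℝ) :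
    ‖kdvWave p (horizontalLine ε s)‖ =
      rexp (-ε * p.1 + ε ^ 3 * p.2) * rexp (-(3 * ε * p.2) * s ^ 2) := by
  rw [kdvWave, Complex.norm_exp, ← Real.exp_add]
  congr 1
  simp only [Complex.add_re, Complex.mul_re, Complex.mul_im, Complex.I_re, Complex.I_im,
    Complex.ofReal_re, Complex.ofReal_im, horizontalLine_re, horizontalLine_im,
    horizontalLine_pow_three_im]
  ring

lemma norm_kdvWave_horizontalLine_le {p : ℝ × ℝ} {ε x t₁ t₂ : ℝ} (hε : 0 ≤ ε) (hx : x ≤ p.1)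
    (ht₁ : t₁ ≤ p.2) (ht₂ : p.2 ≤ t₂) (s : ℝ) :
    ‖kdvWave p (horizontalLine ε s)‖ ≤
      rexp (-ε * x + ε ^ 3 * t₂) * rexp (-(3 * ε * t₁) * s ^ 2) := by
  rw [norm_kdvWave_horizontalLine, neg_mul, neg_mul, neg_mul, neg_mul]
  gcongr

lemma exists_forall_norm_kdvWave_le_of_mem_uIcc {p : ℝ × ℝ} (hp : 0 < p.2) {ε₁ ε₂ : ℝ}
    (hε₁ : 0 < ε₁) (hε₂ : 0 < ε₂) : ∃ C c : ℝ, 0 < c ∧ ∀ s : ℝ, ∀ y ∈ [[ε₁, ε₂]],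
      ‖kdvWave p (horizontalLine y s)‖ ≤ C * rexp (-c * s ^ 2) := by
  obtain ⟨C, hC⟩ := isCompact_uIcc.exists_bound_of_continuousOn
    (f := fun y : ℝ => rexp (-y * p.1 + y ^ 3 * p.2)) (s := [[ε₁, ε₂]])
    (Continuous.continuousOn (by fun_prop))
  refine ⟨C, 3 * min ε₁ ε₂ * p.2,
    mul_pos (mul_pos three_pos (lt_min hε₁ hε₂)) hp, fun s y hy => ?_⟩
  have exp_le : rexp (-y * p.1 + y ^ 3 * p.2) ≤ C := (le_abs_self _).trans (hC y hy)
  rw [norm_kdvWave_horizontalLine, neg_mul (3 * y * p.2), neg_mul (3 * min ε₁ ε₂ * p.2)]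
  gcongr
  exacts [(Real.exp_pos _).le.trans exp_le, hy.1]

lemma exists_eventually_norm_kdvWave_le {p : ℝ × ℝ} (hp : 0 < p.2) {ε : ℝ} (hε : 0 < ε) :
    ∃ C c : ℝ, 0 < c ∧ ∀ᶠ q in 𝓝 p, ∀ s : ℝ,
      ‖kdvWave q (horizontalLine ε s)‖ ≤ C * rexp (-c * s ^ 2) := by
  refine ⟨rexp (-ε * (p.1 - 1) + ε ^ 3 * (p.2 + 1)), 3 * ε * (p.2 / 2), by positivity, ?_⟩
  filter_upwards [continuousAt_fst.eventually_const_lt (sub_one_lt p.1),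
    continuousAt_snd.eventually_const_lt (half_lt_self hp),
    continuousAt_snd.eventually_lt_const (lt_add_one p.2)] with q hx ht₁ ht₂
  exact norm_kdvWave_horizontalLine_le hε.le hx.le ht₁.le ht₂.le

/-- The differential `dx` of the first coordinate, as a complex-valued real-linear form. -/
noncomputable def dxForm : ℝ × ℝ →L[ℝ] ℂ :=
  Complex.ofRealCLM.comp (ContinuousLinearMap.fst ℝ ℝ ℝ)

/-- The differential `dt` of the second coordinate, as a complex-valued real-linear form. -/
noncomputable def dtForm : ℝ × ℝ →L[ℝ] ℂ :=
  Complex.ofRealCLM.comp (ContinuousLinearMap.snd ℝ ℝ ℝ)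

lemma hasFDerivAt_kdvWave (z : ℂ) (p : ℝ × ℝ) :
    HasFDerivAt (fun q => kdvWave q z)
      ((kdvWave p z * (Complex.I * z)) • dxForm + (kdvWave p z * (Complex.I * z ^ 3)) • dtForm)
      p := by
  have h := ((dxForm.hasFDerivAt (x := p)).const_mul (Complex.I * z)).add
    ((dtForm.hasFDerivAt (x := p)).const_mul (Complex.I * z ^ 3)) |>.cexp
  refine h.congr_fderiv ?_
  rw [smul_add, smul_smul, smul_smul]
  rfl

end Waves

section WavePackets

/-- The superposition of the KdV waves of frequency `s + iε`, `s ∈ ℝ`, with amplitudes `a s`. -/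
noncomputable def kdvWavePacket (ε : ℝ) (a : ℝ → ℂ) (p : ℝ × ℝ) : ℂ :=
  ∫ s : ℝ, kdvWave p (horizontalLine ε s) * a s

variable {ε : ℝ} {a : ℝ → ℂ}

lemma kdvWavePacket_const_mul (ε : ℝ) (z : ℂ) (a : ℝ → ℂ) (p : ℝ × ℝ) :
    kdvWavePacket ε (fun s => z * a s) p = z * kdvWavePacket ε a p := by
  simp only [kdvWavePacket, mul_left_comm _ z, integral_const_mul]

lemma integrable_kdvWave_mul (hε : 0 < ε) (ha : GaussianIntegrable a) {p : ℝ × ℝ} (hp : 0 < p.2) :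
    Integrable fun s => kdvWave p (horizontalLine ε s) * a s := by
  obtain ⟨C, c, hc, hC⟩ := exists_eventually_norm_kdvWave_le hp hε
  exact ha.mul_of_norm_le hc (by fun_prop) hC.self_of_nhds

theorem hasFDerivAt_kdvWavePacket (hε : 0 < ε) (ha : GaussianIntegrable a) {p : ℝ × ℝ}
    (hp : 0 < p.2) :
    HasFDerivAt (kdvWavePacket ε a)
      ((Complex.I * kdvWavePacket ε (fun s => horizontalLine ε s ^ 1 * a s) p) • dxForm +
        (Complex.I * kdvWavePacket ε (fun s => horizontalLine ε s ^ 3 * a s) p) • dtForm) p := by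
  set b : ℕ → ℝ → ℂ := fun n s => Complex.I * (horizontalLine ε s ^ n * a s)
  have hb (n : ℕ) : GaussianIntegrable (b n) := (ha.horizontalLine_pow_mul ε n).const_mul _
  have hint (n : ℕ) := integrable_kdvWave_mul hε (hb n) hp
  obtain ⟨C, c, hc, hC⟩ := exists_eventually_norm_kdvWave_le hp hε
  have hbound (n : ℕ) : Integrable fun s => C * (rexp (-c * s ^ 2) * ‖b n s‖) := by
    simpa only [norm_mul, Complex.norm_of_nonneg (Real.exp_nonneg _)] using
      (hb n c hc).norm.const_mul C
  have key := hasFDerivAt_integral_of_dominated_of_fderiv_le (μ := volume) (𝕜 := ℝ)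
    (F := fun q s => kdvWave q (horizontalLine ε s) * a s)
    (F' := fun q s => (kdvWave q (horizontalLine ε s) * b 1 s) • dxForm +
      (kdvWave q (horizontalLine ε s) * b 3 s) • dtForm)
    (bound := fun s => C * (rexp (-c * s ^ 2) * ‖b 1 s‖) * ‖dxForm‖ +
      C * (rexp (-c * s ^ 2) * ‖b 3 s‖) * ‖dtForm‖) hC
    (.of_forall fun q => (Continuous.aestronglyMeasurable (by fun_prop)).mul
      ha.aestronglyMeasurable)
    (integrable_kdvWave_mul hε ha hp)
    (((hint 1).smul_const dxForm).add ((hint 3).smul_const dtForm)).aestronglyMeasurable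
    (ae_of_all _ fun s q hq => ?_)
    (((hbound 1).mul_const _).add ((hbound 3).mul_const _))
    (ae_of_all _ fun s q _ => ?_)
  · rw [integral_add ((hint 1).smul_const dxForm) ((hint 3).smul_const dtForm),
      integral_smul_const, integral_smul_const] at key
    simp only [← kdvWavePacket_const_mul]
    exact key
  · refine norm_add_le_of_le ?_ ?_ <;>
    · rw [norm_smul, norm_mul, ← mul_assoc]
      gcongr
      exact hq s
  · refine ((hasFDerivAt_kdvWave (horizontalLine ε s) q).mul_const (a s)).congr_fderiv ?_
    simp only [smul_add, smul_smul, b]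
    ring_nf

theorem contDiffOn_kdvWavePacket (hε : 0 < ε) (ha : GaussianIntegrable a) :
    ContDiffOn ℝ (⊤ : ℕ∞) (kdvWavePacket ε a) {p | 0 < p.2} := by
  refine contDiffOn_infty.2 fun n => ?_
  induction n generalizing a with
  | zero =>
    exact contDiffOn_zero.2 fun p hp =>
      (hasFDerivAt_kdvWavePacket hε ha hp).continuousAt.continuousWithinAt
  | succ n ih =>
    have isOpen_upper : IsOpen {p : ℝ × ℝ | 0 < p.2} := isOpen_lt continuous_const continuous_snd
    push_cast
    rw [contDiffOn_succ_iff_hasFDerivWithinAt_of_uniqueDiffOn isOpen_upper.uniqueDiffOn]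
    refine ⟨by simp, _, ?_, fun p hp => (hasFDerivAt_kdvWavePacket hε ha hp).hasFDerivWithinAt⟩
    exact ((contDiffOn_const.mul (ih (ha.horizontalLine_pow_mul ε 1))).smul contDiffOn_const).add
      ((contDiffOn_const.mul (ih (ha.horizontalLine_pow_mul ε 3))).smul contDiffOn_const)

lemma hasDerivAt_kdvWavePacket_fst (hε : 0 < ε) (ha : GaussianIntegrable a) (x : ℝ) {t : ℝ}
    (ht : 0 < t) :
    HasDerivAt (fun y => kdvWavePacket ε a (y, t))
      (Complex.I * kdvWavePacket ε (fun s => horizontalLine ε s ^ 1 * a s) (x, t)) x := by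
  refine ((hasFDerivAt_kdvWavePacket hε ha (p := (x, t)) ht).comp_hasDerivAt x
    ((hasDerivAt_id x).prodMk (hasDerivAt_const x t))).congr_deriv ?_
  simp [dxForm, dtForm]

lemma hasDerivAt_kdvWavePacket_snd (hε : 0 < ε) (ha : GaussianIntegrable a) (x : ℝ) {t : ℝ}
    (ht : 0 < t) :
    HasDerivAt (fun y => kdvWavePacket ε a (x, y))
      (Complex.I * kdvWavePacket ε (fun s => horizontalLine ε s ^ 3 * a s) (x, t)) t := by
  refine ((hasFDerivAt_kdvWavePacket hε ha (p := (x, t)) ht).comp_hasDerivAt t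
    ((hasDerivAt_const t x).prodMk (hasDerivAt_id t))).congr_deriv ?_
  simp [dxForm, dtForm]

lemma iteratedDeriv_kdvWavePacket_fst (hε : 0 < ε) (ha : GaussianIntegrable a) {t : ℝ}
    (ht : 0 < t) (n : ℕ) :
    iteratedDeriv n (fun y => kdvWavePacket ε a (y, t)) = fun x =>
      Complex.I ^ n * kdvWavePacket ε (fun s => horizontalLine ε s ^ n * a s) (x, t) := by
  induction n with
  | zero => simp
  | succ n ih =>
    ext x
    rw [iteratedDeriv_succ, ih, ((hasDerivAt_kdvWavePacket_fst hε
      (ha.horizontalLine_pow_mul ε n) x ht).const_mul _).deriv, ← mul_assoc, ← pow_succ]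
    simp only [← mul_assoc, ← pow_add, add_comm 1 n]

theorem deriv_kdvWavePacket_eq_neg_iteratedDeriv (hε : 0 < ε) (ha : GaussianIntegrable a) (x : ℝ)
    {t : ℝ} (ht : 0 < t) :
    deriv (fun s => kdvWavePacket ε a (x, s)) t =
      -iteratedDeriv 3 (fun y => kdvWavePacket ε a (y, t)) x := by
  rw [(hasDerivAt_kdvWavePacket_snd hε ha x ht).deriv, iteratedDeriv_kdvWavePacket_fst hε ha ht,
    Complex.I_pow_three]
  ring

end WavePackets

section StepSolution

variable {ε : ℝ}

lemma kdvStepSol_eq_kdvWavePacket (ε x t : ℝ) :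
    kdvStepSol ε x t = -(3 / (2 * (π : ℂ) * Complex.I)) *
      kdvWavePacket ε (fun s => (horizontalLine ε s)⁻¹) (x, t) := by
  simp only [kdvStepSol, kdvWavePacket, kdvWave, horizontalLine, mul_comm (ε : ℂ)]

theorem contDiffOn_kdvStepSol (hε : 0 < ε) :
    ContDiffOn ℝ (⊤ : ℕ∞) (fun p : ℝ × ℝ => kdvStepSol ε p.1 p.2) {p | 0 < p.2} := by
  simp only [kdvStepSol_eq_kdvWavePacket]
  exact contDiffOn_const.mul
    (contDiffOn_kdvWavePacket hε (gaussianIntegrable_inv_horizontalLine hε))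

theorem deriv_kdvStepSol_eq_neg_iteratedDeriv (hε : 0 < ε) (x : ℝ) {t : ℝ} (ht : 0 < t) :
    deriv (fun s => kdvStepSol ε x s) t = -iteratedDeriv 3 (fun y => kdvStepSol ε y t) x := by
  simp only [kdvStepSol_eq_kdvWavePacket, deriv_const_mul_field, iteratedDeriv_const_mul_field]
  rw [deriv_kdvWavePacket_eq_neg_iteratedDeriv hε (gaussianIntegrable_inv_horizontalLine hε) x ht,
    mul_neg]

theorem kdvStepSol_eq_of_pos {ε₁ ε₂ : ℝ} (hε₁ : 0 < ε₁) (hε₂ : 0 < ε₂) (x : ℝ) {t : ℝ}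
    (ht : 0 < t) : kdvStepSol ε₁ x t = kdvStepSol ε₂ x t := by
  obtain ⟨C, c, hc, hC⟩ :=
    exists_forall_norm_kdvWave_le_of_mem_uIcc (p := (x, t)) ht hε₁ hε₂
  have min_pos : 0 < min ε₁ ε₂ := lt_min hε₁ hε₂
  have gaussian_bound (s y : ℝ) (hy : y ∈ [[ε₁, ε₂]]) :
      ‖kdvWave (x, t) (horizontalLine y s) * (horizontalLine y s)⁻¹‖ ≤
        C * (min ε₁ ε₂)⁻¹ * rexp (-c * s ^ 2) := by
    rw [norm_mul, mul_right_comm]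
    have inv_le : ‖(horizontalLine y s)⁻¹‖ ≤ (min ε₁ ε₂)⁻¹ :=
      (norm_inv_horizontalLine_le (min_pos.trans_le hy.1) s).trans (inv_anti₀ min_pos hy.1)
    exact mul_le_mul (hC s y hy) inv_le (norm_nonneg _) ((norm_nonneg _).trans (hC s y hy))
  have differentiableOn : DifferentiableOn ℂ (fun z => kdvWave (x, t) z * z⁻¹)
      (Complex.im ⁻¹' [[ε₁, ε₂]]) := by
    refine (differentiable_kdvWave _).differentiableOn.mul (differentiableOn_inv.mono ?_)
    rintro _ hz rfl
    exact (min_pos.trans_le hz.1).ne' Complex.zero_im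
  have shift := integral_comp_add_mul_I_eq_of_norm_le differentiableOn
    ((integrable_exp_neg_mul_sq hc).const_mul (C * (min ε₁ ε₂)⁻¹))
    (by simpa using (tendsto_exp_neg_mul_sq_cocompact hc).const_mul (C * (min ε₁ ε₂)⁻¹))
    gaussian_bound
  simp only [kdvStepSol_eq_kdvWavePacket, kdvWavePacket]
  exact congrArg _ shift

end StepSolution

section InitialValue

variable {ε : ℝ}

lemma norm_kdvStepSol_le (hε : 0 < ε) (x : ℝ) {t : ℝ} (ht : 0 < t) :
    ‖kdvStepSol ε x t‖ ≤
      3 / (2 * π) * (rexp (-ε * x + ε ^ 3 * t) * √(π / (3 * (ε ^ 3 * t)))) := by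
  have integrand_le (s : ℝ) : ‖kdvWave (x, t) (horizontalLine ε s) * (horizontalLine ε s)⁻¹‖ ≤
      rexp (-ε * x + ε ^ 3 * t) * ε⁻¹ * rexp (-(3 * ε * t) * s ^ 2) := by
    rw [norm_mul, norm_kdvWave_horizontalLine, mul_right_comm]
    gcongr
    exact norm_inv_horizontalLine_le hε s
  have inv_mul_sqrt : ε⁻¹ * √(π / (3 * ε * t)) = √(π / (3 * (ε ^ 3 * t))) := by
    rw [← Real.sqrt_sq (inv_nonneg.2 hε.le), ← Real.sqrt_mul (sq_nonneg _)]
    congr 1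
    field_simp
  have packet_le := norm_integral_le_of_norm_le
    ((integrable_exp_neg_mul_sq (by positivity : 0 < 3 * ε * t)).const_mul _)
    (ae_of_all _ integrand_le)
  rw [integral_const_mul, integral_gaussian, mul_assoc, inv_mul_sqrt] at packet_le
  rw [kdvStepSol_eq_kdvWavePacket, norm_mul]
  gcongr
  · simp [abs_of_pos Real.pi_pos]
  · exact packet_le

lemma norm_kdvStepSol_le_exp_rpow (hε : 0 < ε) (x : ℝ) {t : ℝ} (ht : 0 < t) :
    ‖kdvStepSol ε x t‖ ≤ 3 / (2 * π) * (rexp (-t ^ (-(1 / 3) : ℝ) * x + 1) * √(π / 3)) := by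
  have cube_mul : (t ^ (-(1 / 3) : ℝ)) ^ 3 * t = 1 := by
    rw [← Real.rpow_mul_natCast ht.le, ← Real.rpow_add_one ht.ne']
    norm_num
  have hpos : 0 < t ^ (-(1 / 3) : ℝ) := Real.rpow_pos_of_pos ht _
  simpa only [cube_mul, mul_one, kdvStepSol_eq_of_pos hpos hε x ht] using
    norm_kdvStepSol_le hpos x ht

theorem tendsto_kdvStepSol_nhdsGT_zero (hε : 0 < ε) {x : ℝ} (hx : 0 < x) :
    Tendsto (fun t => kdvStepSol ε x t) (𝓝[>] 0) (𝓝 0) := by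
  have exponent : Tendsto (fun t : ℝ => -t ^ (-(1 / 3) : ℝ) * x + 1) (𝓝[>] 0) atBot :=
    tendsto_atBot_add_const_right _ _ ((tendsto_neg_atTop_atBot.comp
      (tendsto_rpow_neg_nhdsGT_zero (by norm_num))).atBot_mul_const hx)
  refine squeeze_zero_norm' (eventually_mem_nhdsWithin.mono fun t ht =>
    norm_kdvStepSol_le_exp_rpow hε x ht) ?_
  simpa using ((Real.tendsto_exp_atBot.comp exponent).mul_const √(π / 3)).const_mul (3 / (2 * π))

end InitialValue

section BoundaryValue

open Complex

theorem exists_hasDerivAt_comp_exp {f : ℂ → ℂ} (hf : Differentiable ℂ f) :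
    ∃ F : ℂ → ℂ, (∀ w, HasDerivAt F (f (exp w)) w) ∧
      ∀ w, F (w + 2 * π * I) = F w + 2 * π * I * f 0 := by
  have differentiable_dslope : Differentiable ℂ (dslope f 0) := differentiableOn_univ.1
    ((differentiableOn_dslope univ_mem).2 hf.differentiableOn)
  obtain ⟨G, hG⟩ := differentiable_dslope.isExactOn_univ
  refine ⟨fun w => w * f 0 + G (exp w), fun w => ?_, fun w => ?_⟩
  · have h := ((hasDerivAt_id w).mul_const (f 0)).add
      ((hG (exp w) trivial).comp w (hasDerivAt_exp w))
    refine h.congr_deriv ?_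
    have slope : exp w * dslope f 0 (exp w) = f (exp w) - f 0 := by
      simpa using sub_smul_dslope f 0 (exp w)
    linear_combination slope
  · simp only [exp_periodic w]
    ring

lemma integral_comp_pow_horizontalLine_mul_inv {f F : ℂ → ℂ} (hf : Continuous f)
    (hF : ∀ w, HasDerivAt F (f (exp w)) w) {ε : ℝ} (hε : ε ≠ 0) {n : ℕ} (hn : n ≠ 0) (a b : ℝ) :
    ∫ s in a..b, f (horizontalLine ε s ^ n) * (horizontalLine ε s)⁻¹ =
      (F (n * log (horizontalLine ε b)) - F (n * log (horizontalLine ε a))) / n := by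
  rw [sub_div]
  refine intervalIntegral.integral_eq_sub_of_hasDerivAt
    (f := fun s => F (n * log (horizontalLine ε s)) / n) (fun s _ => ?_) ?_
  · have slit : horizontalLine ε s ∈ slitPlane := .inr (by simpa using hε)
    have hlog := ((hasDerivAt_log slit).comp s (hasDerivAt_horizontalLine ε s)).const_mul (n : ℂ)
    refine (((hF _).comp s hlog).div_const n).congr_deriv ?_
    have hn' : (n : ℂ) ≠ 0 := mod_cast hn
    rw [Function.comp_apply, exp_nat_mul, exp_log (horizontalLine_ne_zero hε s)]
    field_simp
  · exact ((by fun_prop : Continuous fun s => f (horizontalLine ε s ^ n)).mul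
      (continuous_inv_horizontalLine hε)).intervalIntegrable _ _

lemma sin_le_sin_of_le_of_le_pi_sub {x y : ℝ} (hx : 0 ≤ x) (hxy : x ≤ y) (hy : y ≤ π - x) :
    Real.sin x ≤ Real.sin y := by
  simpa using strictConcaveOn_sin_Icc.concaveOn.min_le_of_mem_Icc
    (⟨hx, by linarith⟩ : x ∈ Icc 0 π) (⟨by linarith, by linarith⟩ : π - x ∈ Icc 0 π) ⟨hxy, hy⟩

lemma norm_sub_le_of_hasDerivAt_cexp_cexp {t : ℝ} (ht : 0 ≤ t) {F : ℂ → ℂ}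
    (hF : ∀ w, HasDerivAt F (exp (I * t * exp w)) w) {w : ℂ} (hw₀ : 0 ≤ w.im)
    (hw : w.im ≤ π / 2) :
    ‖F (conj w + π * I) - F w‖ ≤ rexp (-(t * (exp w).im)) * π := by
  let arc : Set ℂ := re ⁻¹' {w.re} ∩ im ⁻¹' Icc w.im (π - w.im)
  have convex_arc : Convex ℝ arc := ((convex_singleton _).linear_preimage reLm).inter
    ((convex_Icc _ _).linear_preimage imLm)
  have deriv_le (v : ℂ) (hv : v ∈ arc) :
      ‖exp (I * t * exp v)‖ ≤ rexp (-(t * (exp w).im)) := by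
    have re_eq : v.re = w.re := hv.1
    have sin_le := sin_le_sin_of_le_of_le_pi_sub hw₀ hv.2.1 hv.2.2
    have re_exponent : (I * t * exp v).re = -(t * (exp v).im) := by simp
    rw [norm_exp, re_exponent, exp_im, exp_im, re_eq]
    gcongr
  have left_mem : w ∈ arc := ⟨rfl, le_rfl, by linarith⟩
  have right_mem : conj w + π * I ∈ arc := by
    have im_eq : (conj w + π * I).im = π - w.im := by simp [sub_eq_neg_add]
    exact ⟨by simp, by rw [im_eq]; linarith, im_eq.le⟩
  refine (convex_arc.norm_image_sub_le_of_norm_hasDerivWithin_le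
    (fun v _ => (hF v).hasDerivWithinAt) deriv_le left_mem right_mem).trans ?_
  have chord : conj w + π * I - w = ((π - 2 * w.im : ℝ) : ℂ) * I := by
    apply Complex.ext <;> simp
    ring
  rw [chord, norm_mul, norm_I, mul_one, Complex.norm_of_nonneg (by linarith)]
  gcongr
  linarith

lemma log_neg_conj {z : ℂ} (hz : 0 < z.im) : log (-conj z) = conj (log z) + π * I := by
  have arg_ne : z.arg ≠ π := fun h => hz.ne' (arg_eq_pi_iff.1 h).2
  rw [← log_conj z arg_ne]
  apply Complex.ext
  · simp [log_re]
  · simp [log_im, arg_neg_eq_arg_add_pi_of_im_neg (x := conj z) (by simpa using hz)]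

theorem norm_integral_kdvWave_mul_inv_add_le {ε t S : ℝ} (hε : 0 < ε) (ht : 0 ≤ t)
    (hS : (horizontalLine ε S).arg ≤ π / 6) :
    ‖(∫ s in (-S)..S, kdvWave (0, t) (horizontalLine ε s) * (horizontalLine ε s)⁻¹) +
        2 * π * I / 3‖ ≤ rexp (-(t * (3 * S ^ 2 * ε - ε ^ 3))) * (π / 3) := by
  obtain ⟨F, hF, hFper⟩ := exists_hasDerivAt_comp_exp (f := fun z => exp (I * t * z)) (by fun_prop)
  have im_pos : 0 < (horizontalLine ε S).im := by simpa using hε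
  set w : ℂ := 3 * log (horizontalLine ε S)
  have w_im : w.im = 3 * (horizontalLine ε S).arg := by simp [w, log_im]
  have exp_w : exp w = horizontalLine ε S ^ 3 := by
    rw [← exp_log (horizontalLine_ne_zero hε.ne' S), ← exp_nat_mul, Nat.cast_ofNat]
  have log_left : 3 * log (horizontalLine ε (-S)) = conj w + π * I + 2 * π * I := by
    rw [horizontalLine_neg, log_neg_conj im_pos, map_mul, map_ofNat]
    ring
  have primitive := integral_comp_pow_horizontalLine_mul_inv (f := fun z => exp (I * t * z))
    (by fun_prop) hF hε.ne' three_ne_zero (-S) S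
  have integral_eq : (∫ s in (-S)..S, kdvWave (0, t) (horizontalLine ε s) *
      (horizontalLine ε s)⁻¹) + 2 * π * I / 3 = -(F (conj w + π * I) - F w) / 3 := by
    have wave_eq (z : ℂ) : kdvWave (0, t) z = exp (I * t * z ^ 3) := by
      simp [kdvWave, mul_right_comm]
    simp only [wave_eq, primitive, Nat.cast_ofNat, log_left, hFper, mul_zero, exp_zero]
    ring
  have arg_nonneg : 0 ≤ (horizontalLine ε S).arg := arg_nonneg_iff.2 im_pos.le
  have arc_le := norm_sub_le_of_hasDerivAt_cexp_cexp ht hF (w := w) (by linarith) (by linarith)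
  rw [exp_w, horizontalLine_pow_three_im] at arc_le
  rw [integral_eq, norm_div, norm_neg, norm_ofNat, ← mul_div_assoc]
  gcongr

theorem kdvWavePacket_inv_zero {ε t : ℝ} (hε : 0 < ε) (ht : 0 < t) :
    kdvWavePacket ε (fun s => (horizontalLine ε s)⁻¹) (0, t) = -(2 * π * I / 3) := by
  have tendsto_integral := intervalIntegral_tendsto_integral
    (integrable_kdvWave_mul hε (gaussianIntegrable_inv_horizontalLine hε) (p := (0, t)) ht)
    tendsto_neg_atTop_atBot tendsto_id
  refine tendsto_nhds_unique tendsto_integral (tendsto_iff_norm_sub_tendsto_zero.2 ?_)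
  have exponent : Tendsto (fun S : ℝ => -(t * (3 * S ^ 2 * ε - ε ^ 3))) atTop atBot := by
    refine tendsto_neg_atTop_atBot.comp (Tendsto.const_mul_atTop ht ?_)
    exact tendsto_atTop_add_const_right _ _
      (((tendsto_pow_atTop two_ne_zero).const_mul_atTop three_pos).atTop_mul_const hε)
  refine squeeze_zero' (.of_forall fun S => norm_nonneg _) ?_
    (by simpa using (Real.tendsto_exp_atBot.comp exponent).mul_const (π / 3))
  filter_upwards [(tendsto_arg_horizontalLine ε).eventually_le_const (by positivity : 0 < π / 6)]
    with S hS
  rw [sub_neg_eq_add]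
  exact norm_integral_kdvWave_mul_inv_add_le hε ht.le hS

theorem kdvStepSol_zero {ε t : ℝ} (hε : 0 < ε) (ht : 0 < t) : kdvStepSol ε 0 t = 1 := by
  have pi_ne_zero : (π : ℂ) ≠ 0 := mod_cast Real.pi_ne_zero
  rw [kdvStepSol_eq_kdvWavePacket, kdvWavePacket_inv_zero hε ht]
  field_simp

theorem tendsto_kdvStepSol_nhds_zero {ε t : ℝ} (hε : 0 < ε) (ht : 0 < t) :
    Tendsto (fun x => kdvStepSol ε x t) (𝓝 0) (𝓝 1) := by
  rw [← kdvStepSol_zero hε ht]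
  simp only [kdvStepSol_eq_kdvWavePacket]
  exact ((hasDerivAt_kdvWavePacket_fst hε (gaussianIntegrable_inv_horizontalLine hε) 0
    ht).continuousAt.tendsto).const_mul _

end BoundaryValue

theorem kdv_step_solution_general {ε : ℝ} (hε : 0 < ε) :
    ContDiffOn ℝ (⊤ : ℕ∞) (fun p : ℝ × ℝ => kdvStepSol ε p.1 p.2) {p | 0 < p.2} ∧
    (∀ x t : ℝ, 0 < t →
      deriv (fun s => kdvStepSol ε x s) t
        = -(iteratedDeriv 3 (fun y => kdvStepSol ε y t) x)) ∧
    (∀ t : ℝ, 0 < t → Tendsto (fun x => kdvStepSol ε x t) (𝓝 0) (𝓝 1)) ∧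
    (∀ x : ℝ, 0 < x → Tendsto (fun t => kdvStepSol ε x t) (𝓝[>] 0) (𝓝 0)) :=
  ⟨contDiffOn_kdvStepSol hε, fun x _ => deriv_kdvStepSol_eq_neg_iteratedDeriv hε x,
    fun _ => tendsto_kdvStepSol_nhds_zero hε, fun _ => tendsto_kdvStepSol_nhdsGT_zero hε⟩

/-- `v = v_1` is smooth on `Q`, satisfies the linear KdV equation `∂v/∂t = −∂³v/∂x³`
at every point of `Q`, and satisfies `v(0⁺,t) = 1` for every `t > 0` and
`v(x,0⁺) = 0` for every `x > 0`. -/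
theorem kdv_step_solution :
    ContDiffOn ℝ (⊤ : ℕ∞) (fun p : ℝ × ℝ => kdvStepSol 1 p.1 p.2) quarterPlane ∧
    (∀ x t : ℝ, 0 < x → 0 < t →
      deriv (fun s => kdvStepSol 1 x s) t
        = -(iteratedDeriv 3 (fun y => kdvStepSol 1 y t) x)) ∧
    (∀ t : ℝ, 0 < t →
      Tendsto (fun x => kdvStepSol 1 x t) (nhdsWithin 0 (Ioi 0)) (nhds (1 : ℂ))) ∧
    (∀ x : ℝ, 0 < x →
      Tendsto (fun t => kdvStepSol 1 x t) (nhdsWithin 0 (Ioi 0)) (nhds (0 : ℂ))) := by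
  obtain ⟨smooth, equation, boundary, initial⟩ := kdv_step_solution_general one_pos
  exact ⟨smooth.mono fun _ hp => hp.2, fun x t _ => equation x t,
    fun t ht => (boundary t ht).mono_left nhdsWithin_le_nhds, initial⟩
end

section
/- Let v(x,t) = −(3/(2πi)) ∫_{s∈ℝ} exp( i(s+i)x + i(s+i)³ t ) · (s+i)^{−1} ds on the open quarter-plane Q, and let u = ∂v/∂t. Then u is smooth on Q, satisfies the linear KdV equation ∂u/∂t = −∂³u/∂x³ at every point of Q, satisfies lim_{x→0⁺} u(x,t) = 0 for every t > 0 and lim_{t→0⁺} u(x,t) = 0 for every x > 0, and u is not identically zero on Q. In particular, the homogeneous Dirichlet initial-boundary value problem for the linear KdV equation on the quarter-plane (zero initial datum and zero boundary datum) does not have a unique solution. -/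
open MeasureTheory Filter Set

/-- `u = ∂v/∂t` where `v = v_1`. -/
noncomputable def kdvCounterexample : ℝ → ℝ → ℂ := fun x t =>
  deriv (fun s => kdvStepSol 1 x s) t

/-- `w` is smooth on `Q`, satisfies the linear KdV equation `∂w/∂t = −∂³w/∂x³` at every
point of `Q`, and has vanishing boundary limit (as `x → 0⁺`) and initial limit
(as `t → 0⁺`). -/
def IsHomogeneousKdVSol (w : ℝ → ℝ → ℂ) : Prop :=
  ContDiffOn ℝ (⊤ : ℕ∞) (fun p : ℝ × ℝ => w p.1 p.2) quarterPlane ∧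
  (∀ x t : ℝ, 0 < x → 0 < t →
    deriv (fun s => w x s) t = -(iteratedDeriv 3 (fun y => w y t) x)) ∧
  (∀ t : ℝ, 0 < t → Tendsto (fun x => w x t) (nhdsWithin 0 (Ioi 0)) (nhds (0 : ℂ))) ∧
  (∀ x : ℝ, 0 < x → Tendsto (fun t => w x t) (nhdsWithin 0 (Ioi 0)) (nhds (0 : ℂ)))

/-!
The function `v` is self-similar: moving the contour and rescaling it turns `v x t` into a constant
times `P₋₁ (x t^(-1/3))`, where `Pₙ z = ∫ qⁿ exp(iqz + iq³) dq` over any horizontal line in the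
upper half-plane. These moments satisfy `Pₙ' = i Pₙ₊₁`, and integrating a total derivative along
the line gives the recurrence `n Pₙ₋₁ + i z Pₙ + 3i Pₙ₊₂ = 0`. For `n = 0` it yields
`u x t = -(3/2π) t⁻¹ P₂ (x t^(-1/3))`, and also `P₂ 0 = 0`, which is the boundary condition;
for `n = 3` it is the KdV equation for `u`. The initial condition holds because `P₂` decays
exponentially on the positive axis. Finally `P₂`, being entire, would vanish identically if it
vanished on the positive axis, and by Fourier inversion so would its integrand.
-/

open Complex Topology
open scoped Real FourierTransform

section HorizontalLine

lemma ofReal_add_I_mul_ne_zero {a : ℝ} (ha : a ≠ 0) (s : ℝ) : (s : ℂ) + I * a ≠ 0 :=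
  fun h => ha (by simpa using congrArg im h)

lemma hasDerivAt_ofReal_add_I_mul_left (a s : ℝ) :
    HasDerivAt (fun s : ℝ => (s : ℂ) + I * a) 1 s := by
  simpa using (hasDerivAt_id s).ofReal_comp.add_const (I * (a : ℂ))

lemma hasDerivAt_ofReal_add_I_mul_right (a s : ℝ) :
    HasDerivAt (fun a : ℝ => (s : ℂ) + I * a) I a := by
  simpa using ((hasDerivAt_id a).ofReal_comp.const_mul I).const_add (s : ℂ)

variable {E : Type*} [NormedAddCommGroup E] [NormedSpace ℂ E]

lemma integral_deriv_horizontalLine_eq_zero {f : ℂ → E} {a : ℝ}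
    (hf : ∀ s : ℝ, DifferentiableAt ℂ f (s + I * a))
    (hf_int : Integrable fun s : ℝ => f (s + I * a))
    (hf'_int : Integrable fun s : ℝ => deriv f (s + I * a)) :
    ∫ s : ℝ, deriv f (s + I * a) = 0 := by
  refine integral_eq_zero_of_hasDerivAt_of_integrable (fun s => ?_) hf'_int hf_int
  simpa only [one_smul, Function.comp_def] using
    (hf s).hasDerivAt.scomp s (hasDerivAt_ofReal_add_I_mul_left a s)

-- Moving the line upwards differentiates the integral into `I • ∫ f'`, which vanishes.
theorem integral_horizontalLine_eq [CompleteSpace E] {f : ℂ → E}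
    (hf : DifferentiableOn ℂ f {q | 0 < q.im})
    (hf_int : ∀ a : ℝ, 0 < a → Integrable fun s : ℝ => f (s + I * a))
    (hf'_bound : ∀ α β : ℝ, 0 < α → ∃ g : ℝ → ℝ, Integrable g ∧
      ∀ a s : ℝ, α ≤ a → a ≤ β → ‖deriv f (s + I * a)‖ ≤ g s)
    {a b : ℝ} (ha : 0 < a) (hb : 0 < b) :
    ∫ s : ℝ, f (s + I * a) = ∫ s : ℝ, f (s + I * b) := by
  have hf_at (c : ℝ) (hc : 0 < c) (s : ℝ) : DifferentiableAt ℂ f (s + I * c) :=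
    hf.differentiableAt ((isOpen_lt continuous_const continuous_im).mem_nhds (by simpa))
  have hderiv (c : ℝ) (hc : 0 < c) :
      HasDerivAt (fun c : ℝ => ∫ s : ℝ, f (s + I * c)) 0 c := by
    obtain ⟨g, hg_int, hg⟩ := hf'_bound (c / 2) (2 * c) (by positivity)
    have hmem : Ioo (c / 2) (2 * c) ∈ 𝓝 c := Ioo_mem_nhds (by linarith) (by linarith)
    have hpos (d : ℝ) (hd : d ∈ Ioo (c / 2) (2 * c)) : 0 < d := by linarith [hd.1]
    have hmeas : AEStronglyMeasurable fun s : ℝ => deriv f (s + I * c) :=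
      ((stronglyMeasurable_deriv f).comp_measurable (by fun_prop)).aestronglyMeasurable
    have hf'_int : Integrable fun s : ℝ => deriv f (s + I * c) :=
      hg_int.mono' hmeas (.of_forall fun s => hg c s (by linarith) (by linarith))
    have key := hasDerivAt_integral_of_dominated_loc_of_deriv_le (μ := volume)
      (F := fun (c : ℝ) (s : ℝ) => f (s + I * c)) (F' := fun c s => I • deriv f (s + I * c)) hmem
      (by filter_upwards [hmem] with d hd using (hf_int d (hpos d hd)).aestronglyMeasurable)
      (hf_int c hc) (hmeas.const_smul I)
      (.of_forall fun s d hd => by simpa [norm_smul] using hg d s hd.1.le hd.2.le) hg_int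
      (.of_forall fun s d hd => (hf_at d (hpos d hd) s).hasDerivAt.scomp d
        (hasDerivAt_ofReal_add_I_mul_right d s))
    simpa [integral_smul,
      integral_deriv_horizontalLine_eq_zero (hf_at c hc) (hf_int c hc) hf'_int] using key.2
  exact isOpen_Ioi.is_const_of_deriv_eq_zero isPreconnected_Ioi
    (fun c hc => (hderiv c hc).differentiableAt.differentiableWithinAt)
    (fun c hc => (hderiv c hc).deriv) ha hb

end HorizontalLine

lemma integrable_exp_mul_abs_sub_mul_sq (c : ℝ) {b : ℝ} (hb : 0 < b) :
    Integrable fun s : ℝ => Real.exp (c * |s| - b * s ^ 2) := by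
  refine ((integrable_exp_neg_mul_sq (half_pos hb)).const_mul
    (Real.exp (c ^ 2 / (2 * b)))).mono' (by fun_prop) (.of_forall fun s => ?_)
  rw [Real.norm_of_nonneg (Real.exp_pos _).le, ← Real.exp_add, Real.exp_le_exp]
  have hsq : c ^ 2 / (2 * b) + -(b / 2) * s ^ 2 - (c * |s| - b * s ^ 2) =
      (b * |s| - c) ^ 2 / (2 * b) := by
    rw [← sq_abs s]
    field_simp
    ring
  have : 0 ≤ (b * |s| - c) ^ 2 / (2 * b) := by positivity
  linarith

lemma exists_zpow_le_mul_exp (n : ℤ) {α : ℝ} (hα : 0 < α) :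
    ∃ C : ℝ, 0 ≤ C ∧ ∀ r : ℝ, α ≤ r → r ^ n ≤ C * Real.exp r := by
  obtain ⟨m, rfl | rfl⟩ := n.eq_nat_or_neg
  · refine ⟨m.factorial, by positivity, fun r hr => ?_⟩
    have := Real.pow_div_factorial_le_exp r (hα.le.trans hr) m
    rwa [div_le_iff₀' (by positivity), ← zpow_natCast] at this
  · refine ⟨(α ^ m)⁻¹, by positivity, fun r hr => ?_⟩
    rw [zpow_neg, zpow_natCast]
    calc (r ^ m)⁻¹ ≤ (α ^ m)⁻¹ * 1 := by rw [mul_one]; gcongr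
      _ ≤ (α ^ m)⁻¹ * Real.exp r := by
        gcongr
        exact Real.one_le_exp (hα.le.trans hr)

lemma eq_zero_of_forall_pos_ofReal {f : ℂ → ℂ} (hf : Differentiable ℂ f)
    (hzero : ∀ r : ℝ, 0 < r → f r = 0) : f = 0 := by
  refine AnalyticOnNhd.eq_of_frequently_eq (z₀ := (1 : ℝ))
    (fun z _ => hf.analyticAt z) (fun z _ => analyticAt_const) ?_
  have htend : Tendsto ((↑) : ℝ → ℂ) (𝓝[≠] 1) (𝓝[≠] ((1 : ℝ) : ℂ)) :=
    continuous_ofReal.continuousAt.continuousWithinAt.tendsto_nhdsWithin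
      fun r hr => by simpa using hr
  refine htend.frequently (Eventually.frequently ?_)
  filter_upwards [nhdsWithin_le_nhds (Ioi_mem_nhds one_pos)] with r hr using hzero r hr

lemma eq_zero_of_fourier_eq_zero {V E : Type*} [NormedAddCommGroup V] [InnerProductSpace ℝ V]
    [FiniteDimensional ℝ V] [MeasurableSpace V] [BorelSpace V] [NormedAddCommGroup E]
    [NormedSpace ℂ E] [CompleteSpace E] {f : V → E} (hf : Continuous f) (hf_int : Integrable f)
    (hzero : 𝓕 f = 0) : f = 0 := by
  rw [← hf.fourierInv_fourier_eq hf_int (hzero ▸ integrable_zero _ _ _), hzero]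
  ext x
  simp [Real.fourierInv_eq']

section AiryMoment

/-- The integrand `qⁿ exp(iqz + iq³)` of the moments of the contour integral defining, up to
scaling, the Airy function. The exponent `n` may be negative: `v` is the case `n = -1`. -/
noncomputable def airyKernel (n : ℤ) (z q : ℂ) : ℂ :=
  q ^ n * exp (I * q * z + I * q ^ 3)

/-- The contour integral of `airyKernel n z` over the line `Im q = a`, parametrized by `Re q`. -/
noncomputable def airyMoment (a : ℝ) (n : ℤ) (z : ℂ) : ℂ :=
  ∫ s : ℝ, airyKernel n z (s + I * a)

lemma hasDerivAt_airyKernel_left (n : ℤ) (z : ℂ) {q : ℂ} (hq : q ≠ 0) :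
    HasDerivAt (fun z => airyKernel n z q) (I * airyKernel (n + 1) z q) z := by
  have hphase : HasDerivAt (fun z => I * q * z + I * q ^ 3) (I * q) z := by
    simpa using ((hasDerivAt_id z).const_mul (I * q)).add_const (I * q ^ 3)
  refine (hphase.cexp.const_mul (q ^ n)).congr_deriv ?_
  rw [airyKernel, zpow_add_one₀ hq]
  ring

lemma hasDerivAt_airyKernel (n : ℤ) (z : ℂ) {q : ℂ} (hq : q ≠ 0) :
    HasDerivAt (airyKernel n z)
      (n * airyKernel (n - 1) z q + I * z * airyKernel n z q +
        3 * I * airyKernel (n + 2) z q) q := by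
  have hphase : HasDerivAt (fun q => I * q * z + I * q ^ 3) (I * z + I * (3 * q ^ 2)) q := by
    simpa using (((hasDerivAt_id q).const_mul I).mul_const z).fun_add
      ((hasDerivAt_pow 3 q).const_mul I)
  refine ((hasDerivAt_zpow n q (.inl hq)).mul hphase.cexp).congr_deriv ?_
  simp only [airyKernel, zpow_add₀ hq]
  norm_cast
  ring

lemma norm_exp_airyPhase_le (z q : ℂ) :
    ‖exp (I * q * z + I * q ^ 3)‖ ≤
      Real.exp (‖z‖ * ‖q‖ + (q.im ^ 3 - 3 * q.im * q.re ^ 2)) := by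
  have hcube : (I * q ^ 3).re = q.im ^ 3 - 3 * q.im * q.re ^ 2 := by
    simp only [pow_succ, pow_zero, one_mul, mul_re, I_re, mul_im, zero_mul, I_im, zero_sub]
    ring
  have hlin : (I * q * z).re ≤ ‖z‖ * ‖q‖ := by
    simpa [mul_comm] using re_le_norm (I * q * z)
  rw [norm_exp, Real.exp_le_exp, add_re, hcube]
  gcongr

lemma exists_integrable_bound_airyKernel (n : ℤ) (R : ℝ) {α : ℝ} (hα : 0 < α) (β : ℝ) :
    ∃ g : ℝ → ℝ, Integrable g ∧ ∀ (z : ℂ) (a s : ℝ), ‖z‖ ≤ R → α ≤ a → a ≤ β →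
      ‖airyKernel n z (s + I * a)‖ ≤ g s := by
  obtain ⟨C, hC, hpow⟩ := exists_zpow_le_mul_exp n hα
  refine ⟨fun s => C * Real.exp ((R + 1) * β + β ^ 3) *
    Real.exp ((R + 1) * |s| - 3 * α * s ^ 2),
    (integrable_exp_mul_abs_sub_mul_sq _ (by positivity)).const_mul _, fun z a s hz hαa haβ => ?_⟩
  have ha : 0 < a := hα.trans_le hαa
  set q : ℂ := s + I * a
  have hq_re : q.re = s := by simp [q]
  have hq_im : q.im = a := by simp [q]
  have hq_ge : α ≤ ‖q‖ := by
    simpa [hq_im, abs_of_pos ha] using hαa.trans ((le_abs_self a).trans (hq_im ▸ abs_im_le_norm q))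
  have hq_le : ‖q‖ ≤ |s| + β := by
    refine (norm_le_abs_re_add_abs_im q).trans ?_
    rw [hq_re, hq_im, abs_of_pos ha]
    gcongr
  have hexponent : ‖q‖ + (‖z‖ * ‖q‖ + (a ^ 3 - 3 * a * s ^ 2)) ≤
      (R + 1) * β + β ^ 3 + ((R + 1) * |s| - 3 * α * s ^ 2) := by
    have hlin : ‖z‖ * ‖q‖ ≤ R * (|s| + β) := by gcongr; exact (norm_nonneg z).trans hz
    have hcube : a ^ 3 ≤ β ^ 3 := by gcongr
    have hsq : α * s ^ 2 ≤ a * s ^ 2 := by gcongr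
    linarith
  calc ‖airyKernel n z q‖
      ≤ C * Real.exp ‖q‖ * Real.exp (‖z‖ * ‖q‖ + (a ^ 3 - 3 * a * s ^ 2)) := by
        rw [airyKernel, norm_mul, norm_zpow]
        gcongr
        · exact hpow _ hq_ge
        · simpa only [hq_re, hq_im] using norm_exp_airyPhase_le z q
    _ ≤ C * Real.exp ((R + 1) * β + β ^ 3) * Real.exp ((R + 1) * |s| - 3 * α * s ^ 2) := by
        simp only [mul_assoc C, ← Real.exp_add]
        gcongr

variable {a : ℝ}

lemma continuous_airyKernel_horizontalLine (n : ℤ) (z : ℂ) (ha : a ≠ 0) :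
    Continuous fun s : ℝ => airyKernel n z (s + I * a) :=
  continuous_iff_continuousAt.2 fun s => ContinuousAt.comp' (f := fun s : ℝ => (s : ℂ) + I * a)
    (hasDerivAt_airyKernel n z (ofReal_add_I_mul_ne_zero ha s)).continuousAt (by fun_prop)

lemma integrable_airyKernel_horizontalLine (n : ℤ) (z : ℂ) (ha : 0 < a) :
    Integrable fun s : ℝ => airyKernel n z (s + I * a) := by
  obtain ⟨g, hg_int, hg⟩ := exists_integrable_bound_airyKernel n ‖z‖ ha a
  exact hg_int.mono' (continuous_airyKernel_horizontalLine n z ha.ne').aestronglyMeasurable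
    (.of_forall fun s => hg z a s le_rfl le_rfl le_rfl)

lemma hasDerivAt_airyMoment (n : ℤ) (z : ℂ) (ha : 0 < a) :
    HasDerivAt (airyMoment a n) (I * airyMoment a (n + 1) z) z := by
  obtain ⟨g, hg_int, hg⟩ := exists_integrable_bound_airyKernel (n + 1) (‖z‖ + 1) ha a
  have hball (w : ℂ) (hw : w ∈ Metric.ball z 1) : ‖w‖ ≤ ‖z‖ + 1 := by
    have := norm_sub_norm_le w z
    have : ‖w - z‖ < 1 := by simpa [dist_eq_norm] using hw
    linarith
  have key := hasDerivAt_integral_of_dominated_loc_of_deriv_le (μ := volume)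
    (F := fun z (s : ℝ) => airyKernel n z (s + I * a))
    (F' := fun z (s : ℝ) => I * airyKernel (n + 1) z (s + I * a))
    (Metric.ball_mem_nhds z one_pos)
    (.of_forall fun w => (continuous_airyKernel_horizontalLine n w ha.ne').aestronglyMeasurable)
    (integrable_airyKernel_horizontalLine n z ha)
    ((continuous_airyKernel_horizontalLine (n + 1) z ha.ne').aestronglyMeasurable.const_mul I)
    (.of_forall fun s w hw => by simpa using hg w a s (hball w hw) le_rfl le_rfl) hg_int
    (.of_forall fun s w _ => hasDerivAt_airyKernel_left n w (ofReal_add_I_mul_ne_zero ha.ne' s))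
  exact key.2.congr_deriv (integral_const_mul _ _)

lemma differentiable_airyMoment (n : ℤ) (ha : 0 < a) : Differentiable ℂ (airyMoment a n) :=
  fun z => (hasDerivAt_airyMoment n z ha).differentiableAt

lemma airyMoment_recurrence (n : ℤ) (z : ℂ) (ha : 0 < a) :
    n * airyMoment a (n - 1) z + I * z * airyMoment a n z + 3 * I * airyMoment a (n + 2) z = 0 := by
  have hderiv (s : ℝ) := hasDerivAt_airyKernel n z (ofReal_add_I_mul_ne_zero ha.ne' s)
  have hint (m : ℤ) (c : ℂ) : Integrable fun s : ℝ => c * airyKernel m z (s + I * a) :=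
    (integrable_airyKernel_horizontalLine m z ha).const_mul c
  have hzero := integral_deriv_horizontalLine_eq_zero (fun s => (hderiv s).differentiableAt)
    (integrable_airyKernel_horizontalLine n z ha)
    (by simpa only [(hderiv _).deriv] using ((hint _ _).fun_add (hint _ _)).fun_add (hint _ _))
  simp only [(hderiv _).deriv] at hzero
  rwa [integral_add ((hint _ _).fun_add (hint _ _)) (hint _ _), integral_add (hint _ _) (hint _ _),
    integral_const_mul, integral_const_mul, integral_const_mul] at hzero

lemma airyMoment_eq_airyMoment (n : ℤ) (z : ℂ) {b : ℝ} (ha : 0 < a) (hb : 0 < b) :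
    airyMoment a n z = airyMoment b n z := by
  refine integral_horizontalLine_eq (fun q hq => ?_)
    (fun c hc => integrable_airyKernel_horizontalLine n z hc) (fun α β hα => ?_) ha hb
  · have hq0 : q ≠ 0 := by rintro rfl; simp at hq
    exact (hasDerivAt_airyKernel n z hq0).differentiableAt.differentiableWithinAt
  obtain ⟨g₁, hg₁_int, hg₁⟩ := exists_integrable_bound_airyKernel (n - 1) ‖z‖ hα β
  obtain ⟨g₂, hg₂_int, hg₂⟩ := exists_integrable_bound_airyKernel n ‖z‖ hα β
  obtain ⟨g₃, hg₃_int, hg₃⟩ := exists_integrable_bound_airyKernel (n + 2) ‖z‖ hα β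
  refine ⟨fun s => ‖(n : ℂ)‖ * g₁ s + ‖I * z‖ * g₂ s + ‖3 * I‖ * g₃ s,
    ((hg₁_int.const_mul _).add (hg₂_int.const_mul _)).add (hg₃_int.const_mul _),
    fun c s hαc hcβ => ?_⟩
  rw [(hasDerivAt_airyKernel n z (ofReal_add_I_mul_ne_zero (hα.trans_le hαc).ne' s)).deriv]
  refine norm_add₃_le.trans ?_
  simp only [norm_mul _ (airyKernel _ _ _)]
  gcongr ?_ * ?_ + ?_ * ?_ + ?_ * ?_
  exacts [hg₁ z c s le_rfl hαc hcβ, hg₂ z c s le_rfl hαc hcβ, hg₃ z c s le_rfl hαc hcβ]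

lemma airyMoment_dilation (n : ℤ) (z : ℂ) {c : ℝ} (hc : 0 < c) :
    airyMoment (c * a) n z = c ^ (n + 1) *
      ∫ s : ℝ, (s + I * a : ℂ) ^ n *
        exp (I * (s + I * a) * (c * z) + I * (s + I * a) ^ 3 * c ^ 3) := by
  have hc0 : (c : ℂ) ≠ 0 := ofReal_ne_zero.2 hc.ne'
  have hsubst := Measure.integral_comp_mul_left
    (fun s : ℝ => airyKernel n z (s + I * (c * a : ℝ))) c
  rw [abs_of_pos (inv_pos.2 hc), real_smul, ofReal_inv, eq_inv_mul_iff_mul_eq₀ hc0] at hsubst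
  rw [airyMoment, ← hsubst, zpow_add_one₀ hc0, mul_comm ((c : ℂ) ^ n), mul_assoc (c : ℂ),
    ← integral_const_mul ((c : ℂ) ^ n)]
  congr 2 with s
  have hline : ((c * s : ℝ) : ℂ) + I * (c * a : ℝ) = c * (s + I * a) := by
    push_cast
    ring
  rw [hline, airyKernel, mul_zpow, mul_assoc]
  ring_nf

lemma iteratedDeriv_airyMoment_ofReal_mul (n : ℤ) (m : ℕ) (b : ℝ) (ha : 0 < a) :
    iteratedDeriv m (fun x : ℝ => airyMoment a n (x * b : ℝ)) =
      fun x => (I * b) ^ m * airyMoment a (n + m) (x * b : ℝ) := by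
  induction m with
  | zero => simp
  | succ m ih =>
    ext x
    have hscale : HasDerivAt (fun x : ℝ => ((x * b : ℝ) : ℂ)) b x := by
      simpa using ((hasDerivAt_id x).mul_const b).ofReal_comp
    rw [iteratedDeriv_succ, ih]
    refine (((hasDerivAt_airyMoment _ _ ha).scomp x hscale).const_mul _).deriv.trans ?_
    rw [smul_eq_mul]
    push_cast
    ring_nf

lemma norm_airyMoment_ofReal_le (a : ℝ) (n : ℤ) (r : ℝ) :
    ‖airyMoment a n r‖ ≤ (∫ s : ℝ, ‖airyKernel n 0 (s + I * a)‖) * Real.exp (-(a * r)) := by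
  refine (norm_integral_le_integral_norm _).trans_eq ?_
  rw [← integral_mul_const]
  congr with s
  rw [airyKernel, airyKernel, norm_mul, norm_mul, norm_exp, norm_exp, mul_assoc _ (Real.exp _),
    ← Real.exp_add]
  congr 2
  simp only [add_re, mul_re, I_re, ofReal_re, zero_mul, I_im, ofReal_im, mul_zero, sub_self,
    add_zero, add_im, mul_im, one_mul, zero_add, zero_sub, neg_mul, sub_zero]
  ring

lemma fourier_airyKernel_horizontalLine (a : ℝ) (n : ℤ) (w : ℝ) :
    𝓕 (fun s : ℝ => airyKernel n 0 (s + I * a)) w =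
      exp (-2 * π * a * w) * airyMoment a n (-2 * π * w) := by
  rw [Real.fourier_real_eq_integral_exp_smul, airyMoment, ← integral_const_mul]
  congr with s
  rw [airyKernel, airyKernel, smul_eq_mul, mul_left_comm, mul_left_comm (exp _), ← exp_add,
    ← exp_add]
  congr 2
  push_cast
  linear_combination (2 * π * a * w) * I_sq

lemma exists_pos_airyMoment_ne_zero (n : ℤ) (ha : 0 < a) :
    ∃ r : ℝ, 0 < r ∧ airyMoment a n r ≠ 0 := by
  by_contra! hvanish
  have hmoment : airyMoment a n = 0 :=
    eq_zero_of_forall_pos_ofReal (differentiable_airyMoment n ha) hvanish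
  have hkernel := eq_zero_of_fourier_eq_zero (continuous_airyKernel_horizontalLine n 0 ha.ne')
    (integrable_airyKernel_horizontalLine n 0 ha)
    (funext fun w => by simp [fourier_airyKernel_horizontalLine, hmoment])
  have hline := ofReal_add_I_mul_ne_zero ha.ne' 0
  exact mul_ne_zero (zpow_ne_zero n hline) (exp_ne_zero _) (congrFun hkernel 0)

end AiryMoment

section SimilaritySolution

/-- The similarity variable `ξ = x t^(-1/3)` of the linear KdV equation. -/
noncomputable def kdvSimilarity (x t : ℝ) : ℝ := x * t ^ (-(1 / 3) : ℝ)

lemma rpow_neg_third_pow_three {t : ℝ} (ht : 0 ≤ t) : (t ^ (-(1 / 3) : ℝ)) ^ 3 = t⁻¹ := by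
  rw [← Real.rpow_mul_natCast ht, ← Real.rpow_neg_one]
  norm_num

lemma hasDerivAt_kdvSimilarity (x : ℝ) {t : ℝ} (ht : t ≠ 0) :
    HasDerivAt (kdvSimilarity x) (-(1 / 3) * t⁻¹ * kdvSimilarity x t) t := by
  refine ((Real.hasDerivAt_rpow_const (.inl ht)).const_mul x).congr_deriv ?_
  rw [Real.rpow_sub_one ht, kdvSimilarity]
  ring

lemma hasDerivAt_airyMoment_kdvSimilarity {a : ℝ} (ha : 0 < a) (n : ℤ) (x : ℝ) {t : ℝ}
    (ht : t ≠ 0) :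
    HasDerivAt (fun t => airyMoment a n (kdvSimilarity x t))
      (-(1 / 3) * (t : ℂ)⁻¹ * (I * kdvSimilarity x t * airyMoment a (n + 1) (kdvSimilarity x t)))
      t := by
  refine ((hasDerivAt_airyMoment n _ ha).scomp t
    (hasDerivAt_kdvSimilarity x ht).ofReal_comp).congr_deriv ?_
  rw [smul_eq_mul]
  push_cast
  ring

lemma kdvStepSol_eq {ε : ℝ} (hε : 0 < ε) (x : ℝ) {t : ℝ} (ht : 0 < t) :
    kdvStepSol ε x t = -(3 / (2 * π * I)) * airyMoment 1 (-1) (kdvSimilarity x t) := by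
  set c : ℝ := t ^ (1 / 3 : ℝ) with hc
  have hc_pos : 0 < c := Real.rpow_pos_of_pos ht _
  have hc_cube : (c : ℂ) ^ 3 = t := by
    rw [← ofReal_pow, hc, ← Real.rpow_mul_natCast ht.le]
    norm_num
  have hξ : (c : ℂ) * kdvSimilarity x t = x := by
    rw [kdvSimilarity, Real.rpow_neg ht.le, ← hc]
    push_cast
    rw [mul_left_comm, mul_inv_cancel₀ (ofReal_ne_zero.2 hc_pos.ne'), mul_one]
  rw [airyMoment_eq_airyMoment _ _ one_pos (mul_pos hc_pos hε), airyMoment_dilation _ _ hc_pos,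
    hc_cube, hξ]
  simp [kdvStepSol, mul_comm]

lemma kdvCounterexample_eq (x : ℝ) {t : ℝ} (ht : 0 < t) :
    kdvCounterexample x t = -(3 / (2 * π)) * ((t : ℂ)⁻¹ * airyMoment 1 2 (kdvSimilarity x t)) := by
  have hv : kdvStepSol 1 x =ᶠ[𝓝 t] fun t =>
      -(3 / (2 * π * I)) * airyMoment 1 (-1) (kdvSimilarity x t) := by
    filter_upwards [Ioi_mem_nhds ht] with s hs using kdvStepSol_eq one_pos x hs
  have hrec : I * kdvSimilarity x t * airyMoment 1 0 (kdvSimilarity x t) +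
      3 * I * airyMoment 1 2 (kdvSimilarity x t) = 0 := by
    simpa using airyMoment_recurrence 0 (kdvSimilarity x t) one_pos
  rw [kdvCounterexample, hv.deriv_eq,
    ((hasDerivAt_airyMoment_kdvSimilarity one_pos (-1) x ht.ne').const_mul _).deriv,
    neg_add_cancel]
  field_simp
  linear_combination (-I * (t : ℂ)⁻¹) * hrec + ((t : ℂ)⁻¹ * (kdvSimilarity x t *
    airyMoment 1 0 (kdvSimilarity x t) + 3 * airyMoment 1 2 (kdvSimilarity x t))) * I_sq

lemma deriv_kdvCounterexample (x : ℝ) {t : ℝ} (ht : 0 < t) :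
    deriv (kdvCounterexample x) t = 3 / (2 * π) * ((t : ℂ)⁻¹ ^ 2 *
      (airyMoment 1 2 (kdvSimilarity x t) +
        I * kdvSimilarity x t / 3 * airyMoment 1 3 (kdvSimilarity x t))) := by
  have hu : kdvCounterexample x =ᶠ[𝓝 t] fun t =>
      -(3 / (2 * π)) * ((t : ℂ)⁻¹ * airyMoment 1 2 (kdvSimilarity x t)) := by
    filter_upwards [Ioi_mem_nhds ht] with s hs using kdvCounterexample_eq x hs
  have hinv : HasDerivAt (fun t : ℝ => (t : ℂ)⁻¹) (-(t : ℂ)⁻¹ ^ 2) t := by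
    simpa using (hasDerivAt_inv ht.ne').ofReal_comp
  have hmoment := hasDerivAt_airyMoment_kdvSimilarity one_pos 2 x ht.ne'
  rw [hu.deriv_eq, ((hinv.fun_mul hmoment).const_mul _).deriv, two_add_one_eq_three]
  ring

lemma iteratedDeriv_three_kdvCounterexample (x : ℝ) {t : ℝ} (ht : 0 < t) :
    iteratedDeriv 3 (fun y => kdvCounterexample y t) x =
      3 / (2 * π) * ((t : ℂ)⁻¹ ^ 2 * (I * airyMoment 1 5 (kdvSimilarity x t))) := by
  have hb : ((t ^ (-(1 / 3) : ℝ) : ℝ) : ℂ) ^ 3 = (t : ℂ)⁻¹ := by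
    exact_mod_cast rpow_neg_third_pow_three ht.le
  have hderiv := congrFun (iteratedDeriv_airyMoment_ofReal_mul 2 3 (t ^ (-(1 / 3) : ℝ)) one_pos) x
  simp only [kdvCounterexample_eq _ ht, kdvSimilarity]
  rw [iteratedDeriv_const_mul_field, iteratedDeriv_const_mul_field, hderiv, mul_pow, hb,
    I_pow_three, show (2 + (3 : ℕ) : ℤ) = 5 from rfl]
  ring

lemma kdvCounterexample_linearKdV (x : ℝ) {t : ℝ} (ht : 0 < t) :
    deriv (kdvCounterexample x) t = -iteratedDeriv 3 (fun y => kdvCounterexample y t) x := by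
  have hrec : 3 * airyMoment 1 2 (kdvSimilarity x t) +
      I * kdvSimilarity x t * airyMoment 1 3 (kdvSimilarity x t) +
        3 * I * airyMoment 1 5 (kdvSimilarity x t) = 0 := by
    exact_mod_cast airyMoment_recurrence 3 (kdvSimilarity x t) one_pos
  rw [deriv_kdvCounterexample x ht, iteratedDeriv_three_kdvCounterexample x ht]
  linear_combination (1 / (2 * π) * (t : ℂ)⁻¹ ^ 2) * hrec

lemma contDiffOn_kdvCounterexample :
    ContDiffOn ℝ (⊤ : ℕ∞) (fun p : ℝ × ℝ => kdvCounterexample p.1 p.2) quarterPlane := by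
  have hmoment : ContDiff ℝ (⊤ : ℕ∞) (airyMoment 1 2) :=
    (differentiable_airyMoment 2 one_pos).contDiff.restrict_scalars ℝ
  have hinv : ContDiffOn ℝ (⊤ : ℕ∞) (fun p : ℝ × ℝ => ((p.2⁻¹ : ℝ) : ℂ)) quarterPlane :=
    ofRealCLM.contDiff.comp_contDiffOn (contDiff_snd.contDiffOn.inv fun p hp => hp.2.ne')
  have hξ : ContDiffOn ℝ (⊤ : ℕ∞) (fun p : ℝ × ℝ => (kdvSimilarity p.1 p.2 : ℂ)) quarterPlane :=
    ofRealCLM.contDiff.comp_contDiffOn (contDiff_fst.contDiffOn.mul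
      (contDiff_snd.contDiffOn.rpow_const_of_ne fun p hp => hp.2.ne'))
  refine (contDiffOn_const (c := -(3 / (2 * (π : ℂ))))).mul
    (hinv.mul (hmoment.comp_contDiffOn hξ)) |>.congr fun p hp => ?_
  rw [kdvCounterexample_eq p.1 hp.2, ofReal_inv, Function.comp_apply]

lemma tendsto_kdvCounterexample_boundary {t : ℝ} (ht : 0 < t) :
    Tendsto (fun x => kdvCounterexample x t) (𝓝[>] 0) (𝓝 0) := by
  have hzero : airyMoment 1 2 0 = 0 := by simpa using airyMoment_recurrence 0 0 one_pos
  have hcont : Continuous fun x => kdvCounterexample x t := by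
    have := (differentiable_airyMoment 2 one_pos).continuous
    simp only [kdvCounterexample_eq _ ht, kdvSimilarity]
    fun_prop
  refine (hcont.tendsto' 0 0 ?_).mono_left nhdsWithin_le_nhds
  simp [kdvCounterexample_eq _ ht, kdvSimilarity, hzero]

lemma tendsto_kdvCounterexample_initial {x : ℝ} (hx : 0 < x) :
    Tendsto (fun t => kdvCounterexample x t) (𝓝[>] 0) (𝓝 0) := by
  set K := ∫ s : ℝ, ‖airyKernel 2 0 (s + I * (1 : ℝ))‖
  have hξ : Tendsto (kdvSimilarity x) (𝓝[>] 0) atTop :=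
    (tendsto_rpow_neg_nhdsGT_zero (by norm_num)).const_mul_atTop hx
  have hbound := ((Real.tendsto_pow_mul_exp_neg_atTop_nhds_zero 3).comp hξ).const_mul
    (3 / (2 * π) * (x ^ 3)⁻¹ * K)
  rw [mul_zero] at hbound
  refine squeeze_zero_norm' ?_ hbound
  filter_upwards [self_mem_nhdsWithin] with t (ht : 0 < t)
  have hinv : t⁻¹ = (x ^ 3)⁻¹ * kdvSimilarity x t ^ 3 := by
    rw [kdvSimilarity, mul_pow, rpow_neg_third_pow_three ht.le]
    field_simp
  calc ‖kdvCounterexample x t‖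
      = 3 / (2 * π) * (t⁻¹ * ‖airyMoment 1 2 (kdvSimilarity x t)‖) := by
        simp [kdvCounterexample_eq x ht, abs_of_pos ht, abs_of_pos Real.pi_pos]
    _ ≤ 3 / (2 * π) * (t⁻¹ * (K * Real.exp (-(1 * kdvSimilarity x t)))) := by
        gcongr
        exact norm_airyMoment_ofReal_le 1 2 _
    _ = 3 / (2 * π) * (x ^ 3)⁻¹ * K *
          (kdvSimilarity x t ^ 3 * Real.exp (-kdvSimilarity x t)) := by
        rw [hinv, one_mul]
        ring

lemma isHomogeneousKdVSol_kdvCounterexample : IsHomogeneousKdVSol kdvCounterexample :=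
  ⟨contDiffOn_kdvCounterexample, fun x _ _ ht => kdvCounterexample_linearKdV x ht,
    fun _ ht => tendsto_kdvCounterexample_boundary ht,
    fun _ hx => tendsto_kdvCounterexample_initial hx⟩

lemma exists_kdvCounterexample_ne_zero :
    ∃ x t : ℝ, 0 < x ∧ 0 < t ∧ kdvCounterexample x t ≠ 0 := by
  obtain ⟨r, hr, hne⟩ := exists_pos_airyMoment_ne_zero 2 one_pos
  refine ⟨r, 1, hr, one_pos, ?_⟩
  simp [kdvCounterexample_eq r one_pos, kdvSimilarity, hne]

lemma isHomogeneousKdVSol_zero : IsHomogeneousKdVSol fun _ _ => 0 :=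
  ⟨contDiffOn_const, fun _ _ _ _ => by simp, fun _ _ => tendsto_const_nhds,
    fun _ _ => tendsto_const_nhds⟩

end SimilaritySolution

theorem kdv_nonuniqueness :
    IsHomogeneousKdVSol kdvCounterexample ∧
    (∃ x t : ℝ, 0 < x ∧ 0 < t ∧ kdvCounterexample x t ≠ 0) ∧
    (∃ w₁ w₂ : ℝ → ℝ → ℂ, IsHomogeneousKdVSol w₁ ∧ IsHomogeneousKdVSol w₂ ∧
      ∃ x t : ℝ, 0 < x ∧ 0 < t ∧ w₁ x t ≠ w₂ x t) := by
  exact ⟨isHomogeneousKdVSol_kdvCounterexample, exists_kdvCounterexample_ne_zero,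
    kdvCounterexample, fun _ _ => 0, isHomogeneousKdVSol_kdvCounterexample,
    isHomogeneousKdVSol_zero, exists_kdvCounterexample_ne_zero⟩
end

section
/- Let v(x,t) = −(3/(2πi)) ∫_{s∈ℝ} exp( i(s+i)x + i(s+i)³ t ) · (s+i)^{−1} ds on the open quarter-plane Q. For every integer n ≥ 1, the n-th partial derivative u_n = ∂ⁿv/∂tⁿ is smooth on Q, satisfies the linear KdV equation ∂u_n/∂t = −∂³u_n/∂x³ at every point of Q, and satisfies lim_{x→0⁺} u_n(x,t) = 0 for every t > 0 and lim_{t→0⁺} u_n(x,t) = 0 for every x > 0. -/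
open MeasureTheory Filter Set

/-- `u_n = ∂ⁿv/∂tⁿ` (iterated partial derivative in the second variable), `v = v_1`. -/
noncomputable def kdvCounterexampleSeq (n : ℕ) : ℝ → ℝ → ℂ := fun x t =>
  iteratedDeriv n (fun s => kdvStepSol 1 x s) t

/-!
Write `λ = s + iε` for a point of the contour and `G k (x, t) = ∫ λᵏ exp (iλx + iλ³t) dλ`, so that
`v_ε` is a multiple of `G (-1)`. Differentiating under the integral, `∂ₓ` and `∂ₜ` multiply by `i`
and raise `k` by `1` and `3`, which gives smoothness and the linear KdV equation. Integrating
`d/dλ (λᵏ⁺¹ exp (iλx + iλ³t))` gives Euler's identity for the homogeneity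
`G k (x, t) = rᵏ⁺¹ G k (r x, r³ t)`, `r > 0`. For `k = -1` and `x = 0` it says that `v_ε (0, ·)` is
constant, so that its time derivatives vanish; for `r = t^(-1/3)` it turns the exponential decay of
`G k (·, 1)` into the initial limit.
-/

section

open Complex (I)
open scoped Topology ContDiff

/-- The continuous linear map sending a pair `(a, b)` of prospective partial derivatives to the
derivative `(h₁, h₂) ↦ h₁ • a + h₂ • b`. -/
noncomputable def fderivOfPartials (F : Type*) [NormedAddCommGroup F] [NormedSpace ℝ F] :
    F × F →L[ℝ] ℝ × ℝ →L[ℝ] F :=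
  (ContinuousLinearMap.smulRightL ℝ (ℝ × ℝ) F (.fst ℝ ℝ ℝ)).coprod
    (ContinuousLinearMap.smulRightL ℝ (ℝ × ℝ) F (.snd ℝ ℝ ℝ))

@[simp]
lemma fderivOfPartials_apply {F : Type*} [NormedAddCommGroup F] [NormedSpace ℝ F]
    (a b : F) (h : ℝ × ℝ) : fderivOfPartials F (a, b) h = h.1 • a + h.2 • b := by
  simp [fderivOfPartials]

lemma contDiffOn_of_hasFDerivAt_family {𝕜 E F ι : Type*} [NontriviallyNormedField 𝕜]
    [NormedAddCommGroup E] [NormedSpace 𝕜 E] [NormedAddCommGroup F] [NormedSpace 𝕜 F]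
    {U : Set E} (hU : IsOpen U) {f : ι → E → F} {σ τ : ι → ι} {L : F × F →L[𝕜] E →L[𝕜] F}
    (hf : ∀ i, ∀ p ∈ U, HasFDerivAt (f i) (L (f (σ i) p, f (τ i) p)) p) (i : ι) :
    ContDiffOn 𝕜 ∞ (f i) U := by
  refine contDiffOn_infty.2 fun n => ?_
  induction n generalizing i with
  | zero => exact contDiffOn_zero.2 fun p hp => (hf i p hp).continuousAt.continuousWithinAt
  | succ n ih =>
    rw [Nat.cast_add_one, contDiffOn_succ_iff_fderiv_of_isOpen hU]
    refine ⟨fun p hp => (hf i p hp).differentiableAt.differentiableWithinAt, by simp, ?_⟩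
    exact (L.contDiff.comp_contDiffOn ((ih (σ i)).prodMk (ih (τ i)))).congr
      fun p hp => (hf i p hp).fderiv

/-- The point `λ = s + iε` of the contour `Im λ = ε`. -/
noncomputable def kdvContour (ε s : ℝ) : ℂ := s + I * ε

lemma kdvContour_ne_zero {ε : ℝ} (hε : ε ≠ 0) (s : ℝ) : kdvContour ε s ≠ 0 := fun h =>
  hε <| by simpa [kdvContour] using congrArg Complex.im h

lemma hasDerivAt_kdvContour (ε s : ℝ) : HasDerivAt (kdvContour ε) 1 s :=
  ((hasDerivAt_id s).ofReal_comp.add_const (I * ε)).congr_deriv Complex.ofReal_one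

lemma continuous_kdvContour (ε : ℝ) : Continuous (kdvContour ε) := by
  unfold kdvContour; fun_prop

lemma norm_kdvContour_le (ε s : ℝ) : ‖kdvContour ε s‖ ≤ |s| + |ε| := by
  simpa [kdvContour] using norm_add_le (s : ℂ) (I * ε)

lemma abs_le_norm_kdvContour (ε s : ℝ) : |ε| ≤ ‖kdvContour ε s‖ := by
  simpa [kdvContour] using Complex.abs_im_le_norm (kdvContour ε s)

/-- The function `s ↦ |λ|ᵏ exp (-c s²)`, `λ = s + iε`. For `c = 3εt` it is the modulus of the
integrand `λᵏ exp (iλx + iλ³t)` up to a factor independent of `s`. -/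
noncomputable def kdvGaussian (ε : ℝ) (k : ℤ) (c s : ℝ) : ℝ :=
  ‖kdvContour ε s‖ ^ k * Real.exp (-c * s ^ 2)

lemma continuous_kdvGaussian {ε : ℝ} (hε : ε ≠ 0) (k : ℤ) (c : ℝ) :
    Continuous (kdvGaussian ε k c) :=
  ((continuous_kdvContour ε).norm.zpow₀ k
    fun s => .inl (norm_ne_zero_iff.2 (kdvContour_ne_zero hε s))).mul (by fun_prop)

lemma integrable_abs_pow_mul_exp_neg_mul_sq (n : ℕ) {c : ℝ} (hc : 0 < c) :
    Integrable fun s : ℝ => |s| ^ n * Real.exp (-c * s ^ 2) := by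
  have h : (-1 : ℝ) < n := by linarith [n.cast_nonneg (α := ℝ)]
  simpa using (integrable_rpow_mul_exp_neg_mul_sq hc h).norm

lemma exists_norm_kdvContour_zpow_le {ε : ℝ} (hε : ε ≠ 0) (k : ℤ) :
    ∃ (n : ℕ) (A B : ℝ), ∀ s, ‖kdvContour ε s‖ ^ k ≤ A * |s| ^ n + B := by
  obtain ⟨n, rfl | rfl⟩ := k.eq_nat_or_neg
  · refine ⟨n, 2 ^ (n - 1), 2 ^ (n - 1) * |ε| ^ n, fun s => ?_⟩
    calc ‖kdvContour ε s‖ ^ (n : ℤ) = ‖kdvContour ε s‖ ^ n := zpow_natCast _ _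
      _ ≤ (|s| + |ε|) ^ n := by gcongr; exact norm_kdvContour_le ε s
      _ ≤ 2 ^ (n - 1) * (|s| ^ n + |ε| ^ n) := add_pow_le (abs_nonneg s) (abs_nonneg ε) n
      _ = _ := by ring
  · refine ⟨0, 0, (|ε| ^ n)⁻¹, fun s => ?_⟩
    rw [zpow_neg, zpow_natCast, zero_mul, zero_add]
    gcongr
    exact abs_le_norm_kdvContour ε s

lemma integrable_kdvGaussian {ε : ℝ} (hε : ε ≠ 0) (k : ℤ) {c : ℝ} (hc : 0 < c) :
    Integrable (kdvGaussian ε k c) := by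
  obtain ⟨n, A, B, hAB⟩ := exists_norm_kdvContour_zpow_le hε k
  refine (((integrable_abs_pow_mul_exp_neg_mul_sq n hc).const_mul A).add
    ((integrable_exp_neg_mul_sq hc).const_mul B)).mono'
    (continuous_kdvGaussian hε k c).aestronglyMeasurable (.of_forall fun s => ?_)
  rw [Real.norm_of_nonneg (by unfold kdvGaussian; positivity)]
  calc kdvGaussian ε k c s ≤ (A * |s| ^ n + B) * Real.exp (-c * s ^ 2) := by
        unfold kdvGaussian; gcongr; exact hAB s
    _ = _ := by simp only [Pi.add_apply]; ring

/-- The integrand `λᵏ exp (iλx + iλ³t)` at `λ = s + iε`. The exponent `k` is an integer because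
`v_ε` corresponds to `k = -1`. -/
noncomputable def kdvIntegrand (ε : ℝ) (k : ℤ) (x t s : ℝ) : ℂ :=
  kdvContour ε s ^ k *
    Complex.exp (I * kdvContour ε s * x + I * kdvContour ε s ^ 3 * t)

/-- The moment `∫ λᵏ exp (iλx + iλ³t) dλ` over the contour `Im λ = ε`. -/
noncomputable def kdvMoment (ε : ℝ) (k : ℤ) (x t : ℝ) : ℂ :=
  ∫ s : ℝ, kdvIntegrand ε k x t s

lemma continuous_kdvIntegrand {ε : ℝ} (hε : ε ≠ 0) (k : ℤ) (x t : ℝ) :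
    Continuous (kdvIntegrand ε k x t) := by
  have hc := continuous_kdvContour ε
  exact (hc.zpow₀ k fun s => .inl (kdvContour_ne_zero hε s)).mul (by fun_prop)

lemma norm_kdvIntegrand (ε : ℝ) (k : ℤ) (x t s : ℝ) :
    ‖kdvIntegrand ε k x t s‖ =
      Real.exp (-(ε * x) + ε ^ 3 * t) * kdvGaussian ε k (3 * ε * t) s := by
  have phase_re : (I * kdvContour ε s * x + I * kdvContour ε s ^ 3 * t).re =
      (-(ε * x) + ε ^ 3 * t) + -(3 * ε * t) * s ^ 2 := by
    simp only [kdvContour, pow_succ, pow_zero, one_mul, Complex.add_re, Complex.add_im,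
      Complex.mul_re, Complex.mul_im, Complex.I_re, Complex.I_im, Complex.ofReal_re,
      Complex.ofReal_im]
    ring
  rw [kdvIntegrand, kdvGaussian, norm_mul, norm_zpow, Complex.norm_exp, phase_re, Real.exp_add]
  ring

lemma norm_kdvIntegrand_le {ε x₀ x t₀ t t₁ : ℝ} (hε : 0 < ε) (hx : x₀ ≤ x) (ht₀ : t₀ ≤ t)
    (ht₁ : t ≤ t₁) (k : ℤ) (s : ℝ) :
    ‖kdvIntegrand ε k x t s‖ ≤
      Real.exp (-(ε * x₀) + ε ^ 3 * t₁) * kdvGaussian ε k (3 * ε * t₀) s := by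
  rw [norm_kdvIntegrand]
  unfold kdvGaussian
  gcongr

lemma integrable_kdvIntegrand {ε t : ℝ} (hε : 0 < ε) (ht : 0 < t) (k : ℤ) (x : ℝ) :
    Integrable (kdvIntegrand ε k x t) :=
  ((integrable_kdvGaussian hε.ne' k (by positivity)).const_mul _).mono'
    (continuous_kdvIntegrand hε.ne' k x t).aestronglyMeasurable
    (.of_forall fun s => (norm_kdvIntegrand ε k x t s).le)

lemma hasFDerivAt_kdvIntegrand {ε : ℝ} (hε : ε ≠ 0) (k : ℤ) (s : ℝ) (p : ℝ × ℝ) :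
    HasFDerivAt (fun q : ℝ × ℝ => kdvIntegrand ε k q.1 q.2 s)
      (fderivOfPartials ℂ (I * kdvIntegrand ε (k + 1) p.1 p.2 s,
        I * kdvIntegrand ε (k + 3) p.1 p.2 s)) p := by
  have hl := kdvContour_ne_zero hε s
  have h₁ : HasFDerivAt (fun q : ℝ × ℝ => (q.1 : ℂ)) _ p :=
    (Complex.ofRealCLM.comp (.fst ℝ ℝ ℝ)).hasFDerivAt
  have h₂ : HasFDerivAt (fun q : ℝ × ℝ => (q.2 : ℂ)) _ p :=
    (Complex.ofRealCLM.comp (.snd ℝ ℝ ℝ)).hasFDerivAt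
  refine ((((h₁.const_mul (I * kdvContour ε s)).add
    (h₂.const_mul (I * kdvContour ε s ^ 3))).cexp).const_mul
      (kdvContour ε s ^ k)).congr_fderiv ?_
  refine ContinuousLinearMap.ext fun h => ?_
  simp only [add_apply, smul_apply, ContinuousLinearMap.comp_apply, ContinuousLinearMap.coe_fst',
    ContinuousLinearMap.coe_snd', Complex.ofRealCLM_apply, smul_eq_mul, fderivOfPartials_apply,
    Complex.real_smul, Pi.add_apply, kdvIntegrand, zpow_add₀ hl, zpow_ofNat, pow_one]
  ring

lemma hasFDerivAt_kdvMoment {ε : ℝ} (hε : 0 < ε) (k : ℤ) {p : ℝ × ℝ} (hp : 0 < p.2) :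
    HasFDerivAt (fun q : ℝ × ℝ => kdvMoment ε k q.1 q.2)
      (fderivOfPartials ℂ (I * kdvMoment ε (k + 1) p.1 p.2,
        I * kdvMoment ε (k + 3) p.1 p.2)) p := by
  let D (q : ℝ × ℝ) (s : ℝ) : ℂ × ℂ :=
    (I * kdvIntegrand ε (k + 1) q.1 q.2 s, I * kdvIntegrand ε (k + 3) q.1 q.2 s)
  let N : Set (ℝ × ℝ) := Ioi (p.1 - 1) ×ˢ Ioo (p.2 / 2) (p.2 + 1)
  let M (j : ℤ) (s : ℝ) : ℝ := Real.exp (-(ε * (p.1 - 1)) + ε ^ 3 * (p.2 + 1)) *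
    kdvGaussian ε j (3 * ε * (p.2 / 2)) s
  have hN : N ∈ 𝓝 p := (isOpen_Ioi.prod isOpen_Ioo).mem_nhds
    ⟨by simp, by simp [hp]⟩
  have D_integrable₁ := (integrable_kdvIntegrand hε hp (k + 1) p.1).const_mul I
  have D_integrable₂ := (integrable_kdvIntegrand hε hp (k + 3) p.1).const_mul I
  have D_integrable : Integrable (D p) := D_integrable₁.prodMk D_integrable₂
  have M_integrable (j : ℤ) : Integrable (M j) :=
    (integrable_kdvGaussian hε.ne' j (by positivity)).const_mul _
  have integrand_le_M {q : ℝ × ℝ} (hq : q ∈ N) (j : ℤ) (s : ℝ) :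
      ‖I * kdvIntegrand ε j q.1 q.2 s‖ ≤ M j s := by
    rw [norm_mul, Complex.norm_I, one_mul]
    exact norm_kdvIntegrand_le hε hq.1.le hq.2.1.le hq.2.2.le j s
  have D_le (s : ℝ) {q : ℝ × ℝ} (hq : q ∈ N) : ‖fderivOfPartials ℂ (D q s)‖ ≤
      ‖fderivOfPartials ℂ‖ * max (M (k + 1) s) (M (k + 3) s) :=
    (fderivOfPartials ℂ).le_opNorm_of_le
      (max_le_max (integrand_le_M hq _ s) (integrand_le_M hq _ s))
  refine (hasFDerivAt_integral_of_dominated_of_fderiv_le hN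
    (.of_forall fun q => (continuous_kdvIntegrand hε.ne' k q.1 q.2).aestronglyMeasurable)
    (integrable_kdvIntegrand hε hp k p.1)
    ((fderivOfPartials ℂ).integrable_comp D_integrable).aestronglyMeasurable
    (.of_forall fun s q hq => D_le s hq)
    (((M_integrable _).sup (M_integrable _)).const_mul _)
    (.of_forall fun s q _ => hasFDerivAt_kdvIntegrand hε.ne' k s q)).congr_fderiv ?_
  rw [(fderivOfPartials ℂ).integral_comp_comm D_integrable,
    integral_pair D_integrable₁ D_integrable₂, integral_const_mul, integral_const_mul]
  rfl

lemma contDiffOn_kdvMoment {ε : ℝ} (hε : 0 < ε) (k : ℤ) :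
    ContDiffOn ℝ ∞ (fun p : ℝ × ℝ => kdvMoment ε k p.1 p.2) {p | 0 < p.2} :=
  contDiffOn_of_hasFDerivAt_family (isOpen_lt continuous_const continuous_snd)
    (f := fun (k : ℤ) (p : ℝ × ℝ) => kdvMoment ε k p.1 p.2) (σ := (· + 1)) (τ := (· + 3))
    (L := (fderivOfPartials ℂ).comp (I • .id ℝ (ℂ × ℂ)))
    (fun k _ hp => (hasFDerivAt_kdvMoment hε k hp).congr_fderiv (by simp)) k

lemma hasDerivAt_kdvMoment_left {ε t : ℝ} (hε : 0 < ε) (ht : 0 < t) (k : ℤ) (x : ℝ) :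
    HasDerivAt (fun y => kdvMoment ε k y t) (I * kdvMoment ε (k + 1) x t) x := by
  simpa [Function.comp_def] using (hasFDerivAt_kdvMoment hε k (p := (x, t)) ht).comp_hasDerivAt x
    ((hasDerivAt_id x).prodMk (hasDerivAt_const x t))

lemma hasDerivAt_kdvMoment_right {ε t : ℝ} (hε : 0 < ε) (ht : 0 < t) (k : ℤ) (x : ℝ) :
    HasDerivAt (fun τ => kdvMoment ε k x τ) (I * kdvMoment ε (k + 3) x t) t := by
  simpa [Function.comp_def] using (hasFDerivAt_kdvMoment hε k (p := (x, t)) ht).comp_hasDerivAt t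
    ((hasDerivAt_const t x).prodMk (hasDerivAt_id t))

lemma iteratedDeriv_kdvMoment_left {ε t : ℝ} (hε : 0 < ε) (ht : 0 < t) (k : ℤ) (n : ℕ) :
    iteratedDeriv n (fun y => kdvMoment ε k y t) =
      fun x => I ^ n * kdvMoment ε (k + n) x t := by
  induction n with
  | zero => simp
  | succ n ih =>
    ext x
    rw [iteratedDeriv_succ, ih, ((hasDerivAt_kdvMoment_left hε ht _ x).const_mul _).deriv,
      ← mul_assoc, ← pow_succ, Nat.cast_succ, add_assoc]

lemma iteratedDeriv_kdvMoment_right {ε t : ℝ} (hε : 0 < ε) (ht : 0 < t) (k : ℤ) (x : ℝ)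
    (n : ℕ) :
    iteratedDeriv n (fun τ => kdvMoment ε k x τ) t = I ^ n * kdvMoment ε (k + 3 * n) x t := by
  induction n generalizing t with
  | zero => simp
  | succ n ih =>
    have ih_near : iteratedDeriv n (fun τ => kdvMoment ε k x τ) =ᶠ[𝓝 t]
        fun τ => I ^ n * kdvMoment ε (k + 3 * n) x τ := by
      filter_upwards [lt_mem_nhds ht] with τ hτ using ih hτ
    rw [iteratedDeriv_succ, ih_near.deriv_eq,
      ((hasDerivAt_kdvMoment_right hε ht _ x).const_mul _).deriv,
      ← mul_assoc, ← pow_succ, Nat.cast_succ, mul_add_one, add_assoc]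

lemma hasDerivAt_kdvIntegrand {ε : ℝ} (hε : ε ≠ 0) (k : ℤ) (x t s : ℝ) :
    HasDerivAt (kdvIntegrand ε (k + 1) x t)
      ((k + 1) * kdvIntegrand ε k x t s + I * x * kdvIntegrand ε (k + 1) x t s +
        3 * I * t * kdvIntegrand ε (k + 3) x t s) s := by
  have hl := kdvContour_ne_zero hε s
  have hd := hasDerivAt_kdvContour ε s
  refine (((hasDerivAt_zpow (k + 1) _ (.inl hl)).comp s hd).mul
    (((hd.const_mul I).mul_const (x : ℂ)).add
      (((hd.pow 3).const_mul I).mul_const (t : ℂ))).cexp).congr_deriv ?_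
  simp only [Pi.add_apply, Pi.pow_apply, Function.comp_apply, kdvIntegrand, add_sub_cancel_right,
    zpow_add₀ hl, zpow_ofNat, pow_one]
  push_cast
  ring

/-- The infinitesimal form of `kdvMoment_eq_scale`. -/
lemma kdvMoment_euler {ε t : ℝ} (hε : 0 < ε) (ht : 0 < t) (k : ℤ) (x : ℝ) :
    (k + 1) * kdvMoment ε k x t + I * x * kdvMoment ε (k + 1) x t +
      3 * I * t * kdvMoment ε (k + 3) x t = 0 := by
  have h₀ := (integrable_kdvIntegrand hε ht k x).const_mul ((k : ℂ) + 1)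
  have h₁ := (integrable_kdvIntegrand hε ht (k + 1) x).const_mul (I * x)
  have h₃ := (integrable_kdvIntegrand hε ht (k + 3) x).const_mul (3 * I * t)
  have h₀₁ := h₀.fun_add h₁
  have h := integral_eq_zero_of_hasDerivAt_of_integrable
    (hasDerivAt_kdvIntegrand hε.ne' k x t) (h₀₁.add h₃)
    (integrable_kdvIntegrand hε ht (k + 1) x)
  rwa [integral_add h₀₁ h₃, integral_add h₀ h₁, integral_const_mul,
    integral_const_mul, integral_const_mul] at h

lemma hasDerivAt_kdvMoment_scale {ε t r : ℝ} (hε : 0 < ε) (ht : 0 < t) (hr : 0 < r)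
    (k : ℤ) (x : ℝ) :
    HasDerivAt (fun r : ℝ => (r : ℂ) ^ (k + 1) * kdvMoment ε k (r * x) (r ^ 3 * t)) 0 r := by
  have hr' : (r : ℂ) ≠ 0 := by exact_mod_cast hr.ne'
  have dilation : HasDerivAt (fun r : ℝ => (r * x, r ^ 3 * t)) (x, 3 * r ^ 2 * t) r := by
    simpa using ((hasDerivAt_id r).mul_const x).prodMk ((hasDerivAt_pow 3 r).mul_const t)
  have moment_along := (hasFDerivAt_kdvMoment hε k (p := (r * x, r ^ 3 * t))
    (by positivity)).comp_hasDerivAt r dilation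
  have power : HasDerivAt (fun r : ℝ => (r : ℂ) ^ (k + 1)) ((k + 1) * (r : ℂ) ^ k) r := by
    simpa using (hasDerivAt_zpow (k + 1) (r : ℂ) (.inl hr')).comp_ofReal
  refine (power.mul moment_along).congr_deriv ?_
  have euler := kdvMoment_euler hε (t := r ^ 3 * t) (by positivity) k (r * x)
  simp only [Function.comp_apply, fderivOfPartials_apply, Complex.real_smul, zpow_add_one₀ hr']
  push_cast at euler ⊢
  linear_combination (r : ℂ) ^ k * euler

lemma kdvMoment_eq_scale {ε t r : ℝ} (hε : 0 < ε) (ht : 0 < t) (hr : 0 < r) (k : ℤ) (x : ℝ) :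
    kdvMoment ε k x t = (r : ℂ) ^ (k + 1) * kdvMoment ε k (r * x) (r ^ 3 * t) := by
  have hd {r : ℝ} (hr : r ∈ Ioi 0) := hasDerivAt_kdvMoment_scale hε ht hr k x
  simpa using isOpen_Ioi.is_const_of_deriv_eq_zero isPreconnected_Ioi
    (fun r hr => (hd hr).differentiableAt.differentiableWithinAt) (fun r hr => (hd hr).deriv)
    (mem_Ioi.2 one_pos) (mem_Ioi.2 hr)

lemma kdvMoment_eq_selfSimilar {ε t : ℝ} (hε : 0 < ε) (ht : 0 < t) (k : ℤ) (x : ℝ) :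
    kdvMoment ε k x t = ((t⁻¹ ^ (3⁻¹ : ℝ) : ℝ) : ℂ) ^ (k + 1) *
      kdvMoment ε k (t⁻¹ ^ (3⁻¹ : ℝ) * x) 1 := by
  have hr : (t⁻¹ ^ (3⁻¹ : ℝ)) ^ 3 * t = 1 := by
    have := Real.rpow_inv_natCast_pow (inv_nonneg.2 ht.le) three_ne_zero
    rw [Nat.cast_ofNat] at this
    rw [this, inv_mul_cancel₀ ht.ne']
  simpa only [hr] using kdvMoment_eq_scale hε ht (r := t⁻¹ ^ (3⁻¹ : ℝ)) (by positivity) k x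

lemma norm_kdvMoment_le (ε : ℝ) (k : ℤ) (x t : ℝ) :
    ‖kdvMoment ε k x t‖ ≤
      Real.exp (-(ε * x) + ε ^ 3 * t) * ∫ s, kdvGaussian ε k (3 * ε * t) s := by
  refine (norm_integral_le_integral_norm _).trans_eq ?_
  simp only [norm_kdvIntegrand, integral_const_mul]

lemma tendsto_zpow_mul_exp_neg_mul_atTop_nhds_zero (k : ℤ) {b : ℝ} (hb : 0 < b) :
    Tendsto (fun r : ℝ => r ^ k * Real.exp (-b * r)) atTop (𝓝 0) := by
  simpa using tendsto_rpow_mul_exp_neg_mul_atTop_nhds_zero k b hb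

lemma tendsto_kdvMoment_initial {ε x : ℝ} (hε : 0 < ε) (hx : 0 < x) (k : ℤ) :
    Tendsto (fun t => kdvMoment ε k x t) (𝓝[>] 0) (𝓝 0) := by
  have scale_atTop : Tendsto (fun t : ℝ => t⁻¹ ^ (3⁻¹ : ℝ)) (𝓝[>] 0) atTop :=
    (tendsto_rpow_atTop (by norm_num)).comp tendsto_inv_nhdsGT_zero
  have bound_tendsto := ((tendsto_zpow_mul_exp_neg_mul_atTop_nhds_zero (k + 1)
    (mul_pos hε hx)).comp scale_atTop).mul_const
      (Real.exp (ε ^ 3) * ∫ s, kdvGaussian ε k (3 * ε) s)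
  rw [zero_mul] at bound_tendsto
  refine squeeze_zero_norm' ?_ bound_tendsto
  filter_upwards [self_mem_nhdsWithin] with t (ht : 0 < t)
  have hr : 0 ≤ t⁻¹ ^ (3⁻¹ : ℝ) := by positivity
  rw [kdvMoment_eq_selfSimilar hε ht, Function.comp_apply, norm_mul, norm_zpow,
    Complex.norm_real, Real.norm_of_nonneg hr, mul_assoc]
  gcongr
  refine (norm_kdvMoment_le ε k _ 1).trans_eq ?_
  rw [Real.exp_add, mul_one, mul_one, mul_assoc, mul_comm _ x, ← mul_assoc ε, neg_mul]

lemma kdvStepSol_eq_kdvMoment (ε x t : ℝ) :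
    kdvStepSol ε x t = -(3 / (2 * Real.pi * I)) * kdvMoment ε (-1) x t := by
  simp only [kdvStepSol, kdvMoment, kdvIntegrand, kdvContour, zpow_neg_one, mul_comm (Inv.inv _)]

lemma kdvStepSol_zero_left {ε t : ℝ} (hε : 0 < ε) (ht : 0 < t) :
    kdvStepSol ε 0 t = kdvStepSol ε 0 1 := by
  simp only [kdvStepSol_eq_kdvMoment, kdvMoment_eq_selfSimilar hε ht, neg_add_cancel, zpow_zero,
    one_mul, mul_zero]

lemma iteratedDeriv_kdvStepSol {ε t : ℝ} (hε : 0 < ε) (ht : 0 < t) (n : ℕ) (x : ℝ) :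
    iteratedDeriv n (fun τ => kdvStepSol ε x τ) t =
      -(3 / (2 * Real.pi * I)) * I ^ n * kdvMoment ε (-1 + 3 * n) x t := by
  simp only [kdvStepSol_eq_kdvMoment]
  rw [iteratedDeriv_const_mul_field, iteratedDeriv_kdvMoment_right hε ht, ← mul_assoc]

lemma contDiffOn_iteratedDeriv_kdvStepSol {ε : ℝ} (hε : 0 < ε) (n : ℕ) :
    ContDiffOn ℝ ∞ (fun p : ℝ × ℝ => iteratedDeriv n (fun τ => kdvStepSol ε p.1 τ) p.2)
      {p | 0 < p.2} :=
  (contDiffOn_const.mul (contDiffOn_kdvMoment hε _)).congr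
    fun p hp => iteratedDeriv_kdvStepSol hε hp n p.1

lemma deriv_iteratedDeriv_kdvStepSol {ε t : ℝ} (hε : 0 < ε) (ht : 0 < t) (n : ℕ) (x : ℝ) :
    deriv (iteratedDeriv n (fun τ => kdvStepSol ε x τ)) t =
      -iteratedDeriv 3 (fun y => iteratedDeriv n (fun τ => kdvStepSol ε y τ) t) x := by
  rw [← iteratedDeriv_succ]
  simp only [iteratedDeriv_kdvStepSol hε ht, iteratedDeriv_const_mul_field,
    iteratedDeriv_kdvMoment_left hε ht]
  push_cast
  rw [mul_add_one, ← add_assoc, pow_succ I n, Complex.I_pow_three]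
  ring

lemma iteratedDeriv_kdvStepSol_zero_left {ε t : ℝ} (hε : 0 < ε) (ht : 0 < t) {n : ℕ}
    (hn : n ≠ 0) : iteratedDeriv n (fun τ => kdvStepSol ε 0 τ) t = 0 := by
  have const_near : (fun τ => kdvStepSol ε 0 τ) =ᶠ[𝓝 t] fun _ => kdvStepSol ε 0 1 := by
    filter_upwards [lt_mem_nhds ht] with τ hτ using kdvStepSol_zero_left hε hτ
  rw [const_near.iteratedDeriv_eq, iteratedDeriv_const, if_neg hn]

lemma tendsto_iteratedDeriv_kdvStepSol_boundary {ε t : ℝ} (hε : 0 < ε) (ht : 0 < t) {n : ℕ}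
    (hn : n ≠ 0) :
    Tendsto (fun x => iteratedDeriv n (fun τ => kdvStepSol ε x τ) t) (𝓝 0) (𝓝 0) := by
  have cont : Continuous fun x => iteratedDeriv n (fun τ => kdvStepSol ε x τ) t := by
    simp only [iteratedDeriv_kdvStepSol hε ht]
    exact continuous_const.mul (continuous_iff_continuousAt.2
      fun x => (hasDerivAt_kdvMoment_left hε ht _ x).continuousAt)
  simpa only [iteratedDeriv_kdvStepSol_zero_left hε ht hn] using cont.tendsto 0

lemma tendsto_iteratedDeriv_kdvStepSol_initial {ε x : ℝ} (hε : 0 < ε) (hx : 0 < x) (n : ℕ) :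
    Tendsto (iteratedDeriv n (fun τ => kdvStepSol ε x τ)) (𝓝[>] 0) (𝓝 0) := by
  have h := (tendsto_kdvMoment_initial hε hx (-1 + 3 * n)).const_mul
    (-(3 / (2 * Real.pi * I)) * I ^ n)
  rw [mul_zero] at h
  refine h.congr' ?_
  filter_upwards [self_mem_nhdsWithin] with t ht using (iteratedDeriv_kdvStepSol hε ht n x).symm

theorem kdv_counterexample_sequence_general {ε : ℝ} (hε : 0 < ε) (n : ℕ) :
    ContDiffOn ℝ ∞ (fun p : ℝ × ℝ => iteratedDeriv n (fun τ => kdvStepSol ε p.1 τ) p.2)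
      {p | 0 < p.2} ∧
    (∀ x t : ℝ, 0 < t →
      deriv (iteratedDeriv n (fun τ => kdvStepSol ε x τ)) t =
        -iteratedDeriv 3 (fun y => iteratedDeriv n (fun τ => kdvStepSol ε y τ) t) x) ∧
    (n ≠ 0 → ∀ t : ℝ, 0 < t →
      Tendsto (fun x => iteratedDeriv n (fun τ => kdvStepSol ε x τ) t) (𝓝 0) (𝓝 0)) ∧
    (∀ x : ℝ, 0 < x →
      Tendsto (iteratedDeriv n (fun τ => kdvStepSol ε x τ)) (𝓝[>] 0) (𝓝 0)) :=
  ⟨contDiffOn_iteratedDeriv_kdvStepSol hε n,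
    fun x _ ht => deriv_iteratedDeriv_kdvStepSol hε ht n x,
    fun hn _ ht => tendsto_iteratedDeriv_kdvStepSol_boundary hε ht hn,
    fun _ hx => tendsto_iteratedDeriv_kdvStepSol_initial hε hx n⟩

end

/-- For every `n ≥ 1`, `u_n = ∂ⁿv/∂tⁿ` is smooth on `Q`, satisfies the linear KdV
equation `∂u_n/∂t = −∂³u_n/∂x³` on `Q`, and has vanishing boundary limit (as `x → 0⁺`)
and initial limit (as `t → 0⁺`). -/
theorem kdv_counterexample_sequence (n : ℕ) (hn : 1 ≤ n) :
    ContDiffOn ℝ (⊤ : ℕ∞) (fun p : ℝ × ℝ => kdvCounterexampleSeq n p.1 p.2)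
      quarterPlane ∧
    (∀ x t : ℝ, 0 < x → 0 < t →
      deriv (fun s => kdvCounterexampleSeq n x s) t
        = -(iteratedDeriv 3 (fun y => kdvCounterexampleSeq n y t) x)) ∧
    (∀ t : ℝ, 0 < t →
      Tendsto (fun x => kdvCounterexampleSeq n x t) (nhdsWithin 0 (Ioi 0))
        (nhds (0 : ℂ))) ∧
    (∀ x : ℝ, 0 < x →
      Tendsto (fun t => kdvCounterexampleSeq n x t) (nhdsWithin 0 (Ioi 0))
        (nhds (0 : ℂ))) :=
  have ⟨smooth, kdv, boundary, initial⟩ := kdv_counterexample_sequence_general one_pos n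
  ⟨smooth.mono fun _ hp => hp.2, fun x t _ ht => kdv x t ht,
    fun t ht => (boundary (Nat.one_le_iff_ne_zero.1 hn) t ht).mono_left nhdsWithin_le_nhds,
    initial⟩
end
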